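/- arXiv:2506.20909 — 7 statements merged into one kernel-verified Lean document; each statement's English description precedes it below -/
import Mathlib

section
/- Let A, n, k, s, t be integers with A > 2 and n > 3 such that χ_n(A) = 2k and ψ_s(A) ≡ ψ_t(A) (mod k). Then s ≡ t (mod 2n) or s ≡ −t (mod 2n). -/
/-- The Lucas sequence `ψ_n(A)` for natural indices:
`ψ_0 = 0`, `ψ_1 = 1`, `ψ_{n+2} = A·ψ_{n+1} − ψ_n`. -/
def psiNat (A : ℤ) : ℕ → ℤ
  | 0 => 0
  | 1 => 1
  | n + 2 => A * psiNat A (n + 1) - psiNat A n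

/-- The Lucas sequence `χ_n(A)` for natural indices:
`χ_0 = 2`, `χ_1 = A`, `χ_{n+2} = A·χ_{n+1} − χ_n`. -/
def chiNat (A : ℤ) : ℕ → ℤ
  | 0 => 2
  | 1 => A
  | n + 2 => A * chiNat A (n + 1) - chiNat A n

/-- The Lucas sequence `ψ_n(A)` for `n ∈ ℤ`: the unique solution of
`x_{n+1} = A·x_n − x_{n−1}` with `ψ_0 = 0`, `ψ_1 = 1`
(for negative indices, `ψ_{−n} = −ψ_n`). -/
def psi (A : ℤ) : ℤ → ℤ
  | .ofNat n => psiNat A n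
  | .negSucc n => -psiNat A (n + 1)

/-- The Lucas sequence `χ_n(A)` for `n ∈ ℤ`: the unique solution of
`x_{n+1} = A·x_n − x_{n−1}` with `χ_0 = 2`, `χ_1 = A`
(for negative indices, `χ_{−n} = χ_n`). -/
def chi (A : ℤ) : ℤ → ℤ
  | .ofNat n => chiNat A n
  | .negSucc n => chiNat A (n + 1)


theorem psiNat_step (A : ℤ) (hA : 2 < A) (m : ℕ) :
    0 ≤ psiNat A m ∧ 2 * psiNat A m + 1 ≤ psiNat A (m + 1) := by
  induction m with
  | zero => simp [psiNat]
  | succ m ih =>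
    obtain ⟨h0, h1⟩ := ih
    refine ⟨by linarith, ?_⟩
    have : psiNat A (m + 1 + 1) = A * psiNat A (m + 1) - psiNat A m := by
      simp [psiNat]
    rw [this]
    nlinarith

theorem psiNat_mono (A : ℤ) (hA : 2 < A) : Monotone (psiNat A) :=
  monotone_nat_of_le_succ fun m => by
    have := psiNat_step A hA m
    linarith [this.1, this.2]

theorem psi_natCast (A : ℤ) (m : ℕ) : psi A (m : ℤ) = psiNat A m := rfl

theorem psi_negCast (A : ℤ) (m : ℕ) : psi A (-(m : ℤ)) = -psiNat A m := by
  cases m with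
  | zero => rfl
  | succ m => rfl

theorem psi_neg (A m : ℤ) : psi A (-m) = -psi A m := by
  obtain ⟨a, rfl | rfl⟩ := m.eq_nat_or_neg
  · rw [psi_negCast, psi_natCast]
  · rw [psi_negCast, neg_neg, psi_natCast, neg_neg]

theorem psi_rec (A m : ℤ) : psi A (m + 1) = A * psi A m - psi A (m - 1) := by
  have key : ∀ a : ℕ, psi A ((a : ℤ) + 1) = A * psi A a - psi A ((a : ℤ) - 1) := by
    intro a
    cases a with
    | zero =>
      have h1 : psi A 1 = 1 := rfl
      have h0 : psi A 0 = 0 := rfl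
      have h2 : psi A (-1) = -1 := rfl
      simp [h1, h0, h2]
    | succ a =>
      have e1 : ((a + 1 : ℕ) : ℤ) + 1 = ((a + 2 : ℕ) : ℤ) := by push_cast; ring
      have e2 : ((a + 1 : ℕ) : ℤ) - 1 = (a : ℤ) := by push_cast; ring
      rw [e1, e2, psi_natCast, psi_natCast, psi_natCast]
      simp [psiNat]
  obtain ⟨a, rfl | rfl⟩ := m.eq_nat_or_neg
  · exact key a
  · have e1 : -(a : ℤ) + 1 = -((a : ℤ) - 1) := by ring
    have e2 : -(a : ℤ) - 1 = -((a : ℤ) + 1) := by ring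
    rw [e1, e2, psi_neg, psi_neg, psi_neg, key a]
    ring

theorem psi_add_sub (A : ℤ) (n : ℕ) : ∀ m : ℤ,
    psi A (m + n) + psi A (m - n) = chiNat A n * psi A m := by
  induction n using Nat.twoStepInduction with
  | zero => intro m; simp [chiNat]; ring
  | one =>
    intro m
    have := psi_rec A m
    simp [chiNat]
    linarith
  | more n ih0 ih1 =>
    intro m
    have h0 := ih0 m
    have h1 := ih1 m
    have r1 := psi_rec A (m + n + 1)
    have r2 := psi_rec A (m - n - 1)
    have c : chiNat A (n + 2) = A * chiNat A (n + 1) - chiNat A n := by simp [chiNat]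
    push_cast at h1 ⊢
    rw [c]
    rw [show m + (n : ℤ) + 1 + 1 = m + (n + 2) by ring,
      show m + (n : ℤ) + 1 - 1 = m + n by ring, show m + (n : ℤ) + 1 = m + (n + 1) by ring] at r1
    rw [show m - (n : ℤ) - 1 + 1 = m - n by ring,
      show m - (n : ℤ) - 1 - 1 = m - (n + 2) by ring,
      show m - (n : ℤ) - 1 = m - (n + 1) by ring] at r2
    linear_combination r1 + r2 + A * h1 - h0

theorem psi_shift (A k : ℤ) (n : ℕ) (hk : chiNat A n = 2 * k) (m : ℤ) :
    k ∣ psi A (m + 2 * n) + psi A m := by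
  have h := psi_add_sub A n (m + n)
  rw [hk, show m + (n : ℤ) + n = m + 2 * n by ring, show m + (n : ℤ) - n = m by ring] at h
  rw [h]
  exact ⟨2 * psi A (m + n), by ring⟩

theorem psi_shift_nat (A k : ℤ) (n : ℕ) (hk : chiNat A n = 2 * k) (q : ℕ) : ∀ m : ℤ,
    k ∣ psi A (m + 2 * n * q) - psi A m ∨ k ∣ psi A (m + 2 * n * q) + psi A m := by
  induction q with
  | zero => intro m; left; simp
  | succ q ih =>
    intro m
    have h1 := psi_shift A k n hk (m + 2 * n * q)
    rw [show m + 2 * (n : ℤ) * q + 2 * n = m + 2 * n * ((q + 1 : ℕ) : ℤ) by push_cast; ring] at h1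
    rcases ih m with h | h
    · right
      have := dvd_sub h1 h
      ring_nf at this ⊢
      exact this
    · left
      have := dvd_sub h1 h
      ring_nf at this ⊢
      exact this

theorem psi_shift_int (A k : ℤ) (n : ℕ) (hk : chiNat A n = 2 * k) (q m : ℤ) :
    k ∣ psi A (m + 2 * n * q) - psi A m ∨ k ∣ psi A (m + 2 * n * q) + psi A m := by
  obtain ⟨a, rfl | rfl⟩ := q.eq_nat_or_neg
  · exact psi_shift_nat A k n hk a m
  · have h := psi_shift_nat A k n hk a (m + 2 * n * (-(a : ℤ)))
    rw [show m + 2 * (n : ℤ) * (-(a : ℤ)) + 2 * n * a = m by ring] at h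
    rcases h with h | h
    · left; rw [← dvd_neg, neg_sub]; exact h
    · right; rw [add_comm]; exact h

theorem psi_reduce (A k : ℤ) (n : ℕ) (hn : 0 < n) (hk : chiNat A n = 2 * k) (s : ℤ) :
    ∃ a : ℕ, a ≤ n ∧ (2 * (n : ℤ) ∣ s - a ∨ 2 * (n : ℤ) ∣ s + a) ∧
      (k ∣ psi A s - psiNat A a ∨ k ∣ psi A s + psiNat A a) := by
  have hpos : (0 : ℤ) < 2 * n := by positivity
  have h0 := Int.emod_nonneg s hpos.ne'
  have h1 := Int.emod_lt_of_pos s hpos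
  have h2 := Int.emod_add_mul_ediv s (2 * n)
  set r := s % (2 * n)
  set q := s / (2 * n)
  by_cases hr : r ≤ n
  · obtain ⟨a, ha⟩ := Int.eq_ofNat_of_zero_le h0
    refine ⟨a, by omega, Or.inl ⟨q, by linarith⟩, ?_⟩
    have := psi_shift_int A k n hk q a
    rw [← ha, h2, ha, psi_natCast] at this
    exact this
  · obtain ⟨a, ha⟩ := Int.eq_ofNat_of_zero_le (show 0 ≤ 2 * (n : ℤ) - r by omega)
    refine ⟨a, by omega, Or.inr ⟨q + 1, by linarith⟩, ?_⟩
    have := psi_shift_int A k n hk (q + 1) (-(a : ℤ))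
    rw [show -(a : ℤ) + 2 * n * (q + 1) = s by linarith, psi_negCast] at this
    rcases this with h | h
    · right; simpa using h
    · left; simpa [sub_eq_add_neg] using h

theorem psi_bound (A k : ℤ) (hA : 2 < A) (N : ℕ) (hk : chiNat A (N + 4) = 2 * k)
    (a b : ℕ) (hab : a < b) (hb : b ≤ N + 4) :
    ¬ (k ∣ psiNat A b - psiNat A a ∨ k ∣ psiNat A b + psiNat A a) := by
  have c := psi_add_sub A (N + 4) 1
  rw [show (1 : ℤ) + ((N + 4 : ℕ) : ℤ) = ((N + 5 : ℕ) : ℤ) by push_cast; ring,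
    show (1 : ℤ) - ((N + 4 : ℕ) : ℤ) = -((N + 3 : ℕ) : ℤ) by push_cast; ring,
    psi_natCast, psi_negCast, hk, show psi A 1 = 1 from rfl] at c
  have e5 : psiNat A (N + 5) = A * psiNat A (N + 4) - psiNat A (N + 3) := by simp [psiNat]
  have e4 : psiNat A (N + 4) = A * psiNat A (N + 3) - psiNat A (N + 2) := by simp [psiNat]
  have e3 : psiNat A (N + 3) = A * psiNat A (N + 2) - psiNat A (N + 1) := by simp [psiNat]
  have s3 := psiNat_step A hA (N + 3)
  have s2 := psiNat_step A hA (N + 2)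
  have s1 := psiNat_step A hA (N + 1)
  have s0 := psiNat_step A hA N
  have mono := psiNat_mono A hA
  have sa := psiNat_step A hA a
  have hab' : psiNat A (a + 1) ≤ psiNat A b := mono hab
  simp only [add_assoc, Nat.reduceAdd] at s0 s1 s2 s3
  have hA4 : 3 * psiNat A (N + 4) ≤ A * psiNat A (N + 4) := by nlinarith
  have hbm : psiNat A b ≤ psiNat A (N + 4) := mono hb
  rintro (h | h)
  · have := Int.le_of_dvd (by linarith) h
    linarith
  · have hle := Int.le_of_dvd (by linarith) h
    by_cases hb3 : b ≤ N + 3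
    · have : psiNat A b ≤ psiNat A (N + 3) := mono hb3
      linarith
    obtain rfl : b = N + 4 := by omega
    have ha3 : psiNat A a ≤ psiNat A (N + 3) := mono (by omega)
    obtain ⟨d, hd⟩ := h
    have hkpos : 0 < k := by linarith
    have hd0 : 0 < d := by
      by_contra hcon
      nlinarith
    have hd1 : d = 1 := by
      by_contra hcon
      have : 2 ≤ d := by omega
      nlinarith
    rw [hd1, mul_one] at hd
    by_cases hA3 : A = 3
    · subst hA3
      by_cases h3 : a = N + 3
      · subst h3; linarith
      by_cases h2 : a = N + 2
      · subst h2; linarith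
      have : psiNat 3 a ≤ psiNat 3 (N + 1) := mono (by omega)
      linarith
    · have : 4 ≤ A := by omega
      have : 4 * psiNat A (N + 4) ≤ A * psiNat A (N + 4) := by nlinarith
      linarith

/-- Let `A > 2`, `n > 3` with `χ_n(A) = 2k`, and suppose
`ψ_s(A) ≡ ψ_t(A) (mod k)`. Then `s ≡ t (mod 2n)` or `s ≡ −t (mod 2n)`. -/
theorem psi_congruent_implies_index_congruent (A n k s t : ℤ) (hA : 2 < A) (hn : 3 < n)
    (hchi : chi A n = 2 * k) (h : psi A s ≡ psi A t [ZMOD k]) :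
    s ≡ t [ZMOD 2 * n] ∨ s ≡ -t [ZMOD 2 * n] := by
  obtain ⟨N, rfl⟩ : ∃ N : ℕ, n = ((N + 4 : ℕ) : ℤ) := ⟨(n - 4).toNat, by push_cast; omega⟩
  have hk : chiNat A (N + 4) = 2 * k := hchi
  obtain ⟨a, ha, has, hap⟩ := psi_reduce A k (N + 4) (by omega) hk s
  obtain ⟨b, hb, hbt, hbp⟩ := psi_reduce A k (N + 4) (by omega) hk t
  have hd : k ∣ psi A t - psi A s := h.dvd
  have key : k ∣ psiNat A b - psiNat A a ∨ k ∣ psiNat A b + psiNat A a := by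
    obtain ⟨x, hx⟩ := hd
    rcases hap with ⟨y, hy⟩ | ⟨y, hy⟩ <;> rcases hbp with ⟨z, hz⟩ | ⟨z, hz⟩
    · left; exact ⟨x + y - z, by linear_combination hx + hy - hz⟩
    · right; exact ⟨z - x - y, by linear_combination hz - hx - hy⟩
    · right; exact ⟨x + y - z, by linear_combination hx + hy - hz⟩
    · left; exact ⟨z - x - y, by linear_combination hz - hx - hy⟩
  have hab : a = b := by
    rcases lt_trichotomy a b with hlt | heq | hgt
    · exact absurd key (psi_bound A k hA N hk a b hlt hb)
    · exact heq
    · refine absurd ?_ (psi_bound A k hA N hk b a hgt ha)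
      rcases key with h' | h'
      · left; rw [← dvd_neg, neg_sub]; exact h'
      · right; rw [add_comm]; exact h'
  subst hab
  rcases has with ⟨y, hy⟩ | ⟨y, hy⟩ <;> rcases hbt with ⟨z, hz⟩ | ⟨z, hz⟩
  · left; exact Int.modEq_iff_dvd.2 ⟨z - y, by linear_combination hz - hy⟩
  · right; exact Int.modEq_iff_dvd.2 ⟨-z - y, by linear_combination -hz - hy⟩
  · right; exact Int.modEq_iff_dvd.2 ⟨-z - y, by linear_combination -hz - hy⟩
  · left; exact Int.modEq_iff_dvd.2 ⟨z - y, by linear_combination hz - hy⟩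
end

section
/- Let A, B, U, V be integers with B > 0 and U² − A·U·V + V² ≠ 0. Then (U·V)^{B−1}·ψ_B(A) ≡ Σ_{r=0}^{B−1} U^{2r}·V^{2(B−1−r)} (mod U² − A·U·V + V²). -/
lemma sum_step (U V : ℤ) (n : ℕ) :
    ∑ r ∈ Finset.range (n + 2), U ^ (2 * r) * V ^ (2 * (n + 1 - r)) =
      V ^ 2 * (∑ r ∈ Finset.range (n + 1), U ^ (2 * r) * V ^ (2 * (n - r))) +
        U ^ (2 * (n + 1)) := by
  rw [Finset.sum_range_succ, Finset.mul_sum]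
  congr 1
  · apply Finset.sum_congr rfl
    intro r hr
    have hr' : r < n + 1 := Finset.mem_range.mp hr
    have e : 2 * (n + 1 - r) = 2 * (n - r) + 2 := by omega
    rw [e, pow_add]
    ring
  · simp

lemma psiNat_dvd (A U V : ℤ) (n : ℕ) :
    (U ^ 2 - A * U * V + V ^ 2 ∣
      (∑ r ∈ Finset.range (n + 1), U ^ (2 * r) * V ^ (2 * (n - r))) -
        (U * V) ^ n * psiNat A (n + 1)) ∧
    (U ^ 2 - A * U * V + V ^ 2 ∣
      (∑ r ∈ Finset.range (n + 2), U ^ (2 * r) * V ^ (2 * (n + 1 - r))) -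
        (U * V) ^ (n + 1) * psiNat A (n + 2)) := by
  induction n with
  | zero =>
    refine ⟨by simp [psiNat], ⟨1, ?_⟩⟩
    simp [psiNat, Finset.sum_range_succ]
    ring
  | succ n ih =>
    obtain ⟨⟨a, ha⟩, ⟨b, hb⟩⟩ := ih
    refine ⟨⟨b, hb⟩, ?_⟩
    have h1 := sum_step U V n
    have h2 := sum_step U V (n + 1)
    have h3 : psiNat A (n + 1 + 2) = A * psiNat A (n + 2) - psiNat A (n + 1) := rfl
    rw [h2, h3]
    rw [show n + 1 + 1 = n + 2 from rfl]
    generalize (∑ r ∈ Finset.range (n + 2), U ^ (2 * r) * V ^ (2 * (n + 1 - r))) = s1 at *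
    generalize (∑ r ∈ Finset.range (n + 1), U ^ (2 * r) * V ^ (2 * (n - r))) = s0 at *
    refine ⟨s1 + A * U * V * b - (U * V) ^ 2 * a, ?_⟩
    linear_combination (A * U * V) * hb - (U * V) ^ 2 * ha - U ^ 2 * h1

/-- Let `A, U, V` be integers and `B > 0` with `U² − AUV + V² ≠ 0`. Then
`(UV)^{B−1}·ψ_B(A) ≡ ∑_{r=0}^{B−1} U^{2r}·V^{2(B−1−r)} (mod U² − AUV + V²)`. -/
theorem psi_exp_congruence (A U V : ℤ) (B : ℕ) (hB : 0 < B)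
    (h : U ^ 2 - A * U * V + V ^ 2 ≠ 0) :
    (U * V) ^ (B - 1) * psi A (B : ℤ) ≡
      ∑ r ∈ Finset.range B, U ^ (2 * r) * V ^ (2 * (B - 1 - r))
      [ZMOD U ^ 2 - A * U * V + V ^ 2] := by
  obtain ⟨n, rfl⟩ : ∃ n, B = n + 1 := ⟨B - 1, by omega⟩
  exact Int.modEq_iff_dvd.mpr (psiNat_dvd A U V n).1
end

section
/- Fix an integer B > 0 and consider, for integers A and W, the congruence 3·W·ψ_B(A) ≡ 2(W² − 1) (mod 2A − 5). If W = 2^B, then the congruence holds for every integer A. Conversely, if the congruence holds and |A| ≥ max{W⁴, 2^{4B}}, then W = 2^B. -/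
theorem lucas_forward (A : ℤ) (n : ℕ) :
    (2 * A - 5 ∣ 3 * 2 ^ n * psiNat A n - 2 * ((2 ^ n) ^ 2 - 1)) ∧
    (2 * A - 5 ∣ 3 * 2 ^ (n + 1) * psiNat A (n + 1) - 2 * ((2 ^ (n + 1)) ^ 2 - 1)) := by
  induction n with
  | zero => simp [psiNat]
  | succ n ih =>
    refine ⟨ih.2, ?_⟩
    obtain ⟨⟨a, ha⟩, ⟨b, hb⟩⟩ := ih
    refine ⟨3 * 2 ^ (n + 1) * psiNat A (n + 1) + 5 * b - 4 * a, ?_⟩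
    have e : psiNat A (n + 1 + 1) = A * psiNat A (n + 1) - psiNat A n := rfl
    rw [e]
    simp only [pow_succ] at ha hb ⊢
    linear_combination 5 * hb - 4 * ha

/-- Fix `B > 0` and consider the congruence
`3·W·ψ_B(A) ≡ 2(W² − 1) (mod 2A − 5)`.
If `W = 2^B` the congruence holds for every integer `A`; conversely, if the
congruence holds and `|A| ≥ max{W⁴, 2^{4B}}`, then `W = 2^B`. -/
theorem power_of_two_via_lucas (B : ℕ) (hB : 0 < B) :
    (∀ A W : ℤ, W = 2 ^ B →
        3 * W * psi A (B : ℤ) ≡ 2 * (W ^ 2 - 1) [ZMOD 2 * A - 5]) ∧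
    (∀ A W : ℤ, 3 * W * psi A (B : ℤ) ≡ 2 * (W ^ 2 - 1) [ZMOD 2 * A - 5] →
        max (W ^ 4) (2 ^ (4 * B)) ≤ |A| → W = 2 ^ B) := by
  have fwd : ∀ A : ℤ, 2 * A - 5 ∣ 3 * 2 ^ B * psi A (B : ℤ) - 2 * ((2 ^ B) ^ 2 - 1) :=
    fun A => (lucas_forward A B).1
  constructor
  · rintro A W rfl
    exact (Int.modEq_iff_dvd.2 (fwd A)).symm
  · intro A W h hA
    have h1 := Int.modEq_iff_dvd.1 h.symm
    have h2 := fwd A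
    have hP : (2 : ℤ) ≤ 2 ^ B := by
      calc (2 : ℤ) = 2 ^ 1 := by norm_num
        _ ≤ 2 ^ B := pow_le_pow_right₀ (by norm_num) hB
    rw [mul_comm 4 B, pow_mul] at hA
    generalize (2 : ℤ) ^ B = P at *
    have hd : 2 * A - 5 ∣ 2 * ((P - W) * (W * P + 1)) := by
      have := dvd_sub (h1.mul_left P) (h2.mul_left W)
      have e : P * (3 * W * psi A (B : ℤ) - 2 * (W ^ 2 - 1)) -
          W * (3 * P * psi A (B : ℤ) - 2 * (P ^ 2 - 1)) =
          2 * ((P - W) * (W * P + 1)) := by ring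
      rwa [e] at this
    have hc : IsCoprime (2 * A - 5) 2 := ⟨1, 3 - A, by ring⟩
    have hd' := hc.dvd_of_dvd_mul_left hd
    have hz : (P - W) * (W * P + 1) = 0 := by
      apply Int.eq_zero_of_abs_lt_dvd ((abs_dvd _ _).2 hd')
      obtain ⟨K, hK2, hWK, hPK, hKA⟩ : ∃ K : ℤ, 2 ≤ K ∧ |W| ≤ K ∧ P ≤ K ∧ K ^ 4 ≤ |A| := by
        have hW4 : |W| ^ 4 = W ^ 4 := by rw [← abs_pow, abs_of_nonneg (by positivity)]
        rcases le_total |W| P with hh | hh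
        · exact ⟨P, hP, hh, le_rfl, (le_max_right _ _).trans hA⟩
        · exact ⟨|W|, hP.trans hh, le_rfl, hh, hW4 ▸ (le_max_left _ _).trans hA⟩
      have hM : 2 * |A| - 5 ≤ |2 * A - 5| := by
        have := abs_sub_abs_le_abs_sub (2 * A) 5
        rw [abs_mul] at this
        simpa using this
      have b1 : |P - W| ≤ 2 * K := by
        have := abs_sub P W
        rw [abs_of_nonneg (by linarith : 0 ≤ P)] at this
        linarith
      have b2 : |W * P + 1| ≤ K * K + 1 := by
        have := abs_add_le (W * P) 1
        rw [abs_mul, abs_of_nonneg (by linarith : 0 ≤ P), abs_one] at this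
        have : |W| * P ≤ K * K := mul_le_mul hWK hPK (by linarith) (by linarith)
        linarith
      have b3 : |P - W| * |W * P + 1| ≤ 2 * K * (K * K + 1) :=
        mul_le_mul b1 b2 (abs_nonneg _) (by linarith)
      rw [abs_mul]
      have b4 : 2 * K * (K * K + 1) < 2 * K ^ 4 - 5 := by
        obtain ⟨k, rfl⟩ : ∃ k, K = k + 2 := ⟨K - 2, by ring⟩
        have hk : 0 ≤ k := by linarith
        have : 0 ≤ 2 * k ^ 4 + 14 * k ^ 3 + 36 * k ^ 2 + 38 * k := by positivity
        linarith [this, show 2 * (k + 2) ^ 4 - 5 - 2 * (k + 2) * ((k + 2) * (k + 2) + 1) = 2 * k ^ 4 + 14 * k ^ 3 + 36 * k ^ 2 + 38 * k + 7 by ring]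
      linarith
    rcases mul_eq_zero.1 hz with h0 | h0
    · linarith
    · exfalso
      have : P ∣ 1 := ⟨-W, by linarith⟩
      have := Int.le_of_dvd one_pos this
      linarith
end

section
/- Let U, V, X be integers with V ≥ 1, X ≥ 1 and |U| ≥ 2X, and set ρ := (V+1)^{2X} / V^X (a rational number). Then |ψ_{2X+1}(U(V+1)) / ψ_{X+1}(U²V) − ρ| ≤ ρ · 2X / (|U|·V). -/
theorem psiNat_neg (A : ℤ) (n : ℕ) :
    psiNat (-A) n = (-1) ^ (n + 1) * psiNat A n ∧
      psiNat (-A) (n + 1) = (-1) ^ n * psiNat A (n + 1) := by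
  induction n with
  | zero => simp [psiNat]
  | succ k ih =>
    obtain ⟨h1, h2⟩ := ih
    refine ⟨by rw [h2]; ring, ?_⟩
    simp only [psiNat]
    rw [h1, h2]
    ring

theorem psiNat_growth (A : ℤ) (hA : 2 ≤ A) (n : ℕ) :
    0 ≤ psiNat A n ∧ psiNat A n ≤ psiNat A (n + 1) := by
  induction n with
  | zero => simp [psiNat]
  | succ k ih =>
    obtain ⟨h1, h2⟩ := ih
    refine ⟨by linarith, ?_⟩
    simp only [psiNat]
    nlinarith

theorem psiNat_bounds (A : ℤ) (hA : 2 ≤ A) (n : ℕ) :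
    (A - 1) ^ n ≤ psiNat A (n + 1) ∧ psiNat A (n + 1) ≤ A ^ n := by
  induction n with
  | zero => simp [psiNat]
  | succ k ih =>
    obtain ⟨h1, h2⟩ := ih
    have h3 := psiNat_growth A hA k
    simp only [psiNat]
    rw [pow_succ, pow_succ]
    constructor <;> nlinarith

theorem psiNat_ratio (A : ℤ) (hA : 2 ≤ A) (n : ℕ) :
    1 - (n : ℚ) / A ≤ (psiNat A (n + 1) : ℚ) / (A : ℚ) ^ n ∧
      (psiNat A (n + 1) : ℚ) / (A : ℚ) ^ n ≤ 1 := by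
  obtain ⟨h1, h2⟩ := psiNat_bounds A hA n
  have hA' : (2 : ℚ) ≤ A := by exact_mod_cast hA
  have hA0 : (0 : ℚ) < A := by linarith
  have h1' : ((A : ℚ) - 1) ^ n ≤ psiNat A (n + 1) := by exact_mod_cast h1
  have h2' : (psiNat A (n + 1) : ℚ) ≤ (A : ℚ) ^ n := by exact_mod_cast h2
  constructor
  · have hi : (1 : ℚ) / A ≤ 1 := by rw [div_le_one hA0]; linarith
    have hb := one_add_mul_le_pow (a := -(1 / (A : ℚ))) (by linarith) n
    have he : (1 + -(1 / (A : ℚ))) ^ n = ((A : ℚ) - 1) ^ n / (A : ℚ) ^ n := by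
      rw [← div_pow]
      congr 1
      field_simp
      ring
    rw [he] at hb
    calc 1 - (n : ℚ) / A = 1 + n * -(1 / (A : ℚ)) := by ring
      _ ≤ _ := hb
      _ ≤ _ := by gcongr
  · rw [div_le_one (by positivity)]
    exact h2'

theorem ratio_final (P Q t : ℚ) (ht0 : 0 ≤ t) (ht1 : t ≤ 1) (hP : 1 - t ≤ P) (hP1 : P ≤ 1)
    (hQ : 1 - t / 4 ≤ Q) (hQ1 : Q ≤ 1) : |P / Q - 1| ≤ t := by
  have hQ0 : 0 < Q := by linarith
  rw [abs_le]
  constructor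
  · have : 1 - t ≤ P / Q := by
      rw [le_div_iff₀ hQ0]
      nlinarith
    linarith
  · have : P / Q ≤ 1 + t := by
      rw [div_le_iff₀ hQ0]
      nlinarith
    linarith

/-- Let `U, V, X` be integers with `V ≥ 1`, `X ≥ 1` and `|U| ≥ 2X`, and set
`ρ := (V+1)^{2X} / V^X ∈ ℚ`.  Then
`|ψ_{2X+1}(U(V+1)) / ψ_{X+1}(U²V) − ρ| ≤ ρ · 2X / (|U|·V)`. -/
theorem psi_ratio_approx (U V : ℤ) (X : ℕ) (hV : 1 ≤ V) (hX : 1 ≤ X)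
    (hU : 2 * (X : ℤ) ≤ |U|) :
    |(psi (U * (V + 1)) (2 * (X : ℤ) + 1) : ℚ) / (psi (U ^ 2 * V) ((X : ℤ) + 1) : ℚ)
        - ((V : ℚ) + 1) ^ (2 * X) / (V : ℚ) ^ X|
      ≤ ((V : ℚ) + 1) ^ (2 * X) / (V : ℚ) ^ X * (2 * (X : ℚ)) / (|(U : ℚ)| * (V : ℚ)) := by
  obtain ⟨u, hu⟩ : ∃ u : ℤ, u = |U| := ⟨_, rfl⟩
  have e1 : psi (U * (V + 1)) (2 * (X : ℤ) + 1) = psiNat (u * (V + 1)) (2 * X + 1) := by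
    change psiNat (U * (V + 1)) (2 * X + 1) = _
    rcases abs_choice U with h | h
    · rw [hu, h]
    · rw [hu, h, neg_mul, (psiNat_neg (U * (V + 1)) (2 * X)).2]
      simp
  have e2 : psi (U ^ 2 * V) ((X : ℤ) + 1) = psiNat (u ^ 2 * V) (X + 1) := by
    rw [hu, sq_abs]
    rfl
  have e3 : |(U : ℚ)| = u := by rw [hu]; push_cast; rfl
  rw [e1, e2, e3]
  rw [← hu] at hU
  have hX' : (1 : ℤ) ≤ X := by exact_mod_cast hX
  have hu2 : 2 ≤ u := by linarith
  have hA : 2 ≤ u * (V + 1) := by nlinarith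
  have hB : 2 ≤ u ^ 2 * V := by nlinarith [mul_le_mul hu2 hu2 (by norm_num) (by linarith)]
  obtain ⟨a1, a2⟩ := psiNat_ratio _ hA (2 * X)
  obtain ⟨b1, b2⟩ := psiNat_ratio _ hB X
  generalize psiNat (u * (V + 1)) (2 * X + 1) = a at *
  generalize psiNat (u ^ 2 * V) (X + 1) = b at *
  push_cast at a1 a2 b1 b2
  have qV : (1 : ℚ) ≤ V := by exact_mod_cast hV
  have qX : (1 : ℚ) ≤ X := by exact_mod_cast hX
  have qU : 2 * (X : ℚ) ≤ u := by exact_mod_cast hU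
  have qu2 : (2 : ℚ) ≤ u := by exact_mod_cast hu2
  generalize (u : ℚ) = w at *
  generalize (V : ℚ) = v at *
  generalize (a : ℚ) = p at *
  generalize (b : ℚ) = q at *
  have hw : 0 < w := by linarith
  have hv : 0 < v := by linarith
  have key := ratio_final (p / (w * (v + 1)) ^ (2 * X)) (q / (w ^ 2 * v) ^ X)
    (2 * X / (w * v)) (by positivity) ?_ ?_ a2 ?_ b2
  · have hr : p / q - (v + 1) ^ (2 * X) / v ^ X = (v + 1) ^ (2 * X) / v ^ X *
        (p / (w * (v + 1)) ^ (2 * X) / (q / (w ^ 2 * v) ^ X) - 1) := by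
      have : (v + 1) ^ (2 * X) / v ^ X = (w * (v + 1)) ^ (2 * X) / (w ^ 2 * v) ^ X := by
        rw [mul_pow, mul_pow, ← pow_mul, mul_div_mul_left _ _ (by positivity)]
      rw [this]
      have h1 : (w * (v + 1)) ^ (2 * X) ≠ 0 := by positivity
      have h2 : (w ^ 2 * v) ^ X ≠ 0 := by positivity
      generalize (w * (v + 1)) ^ (2 * X) = c at *
      generalize (w ^ 2 * v) ^ X = d at *
      rw [mul_sub, mul_one]
      congr 1
      field_simp
    rw [hr, abs_mul, abs_of_nonneg (by positivity), mul_div_assoc]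
    gcongr
  · rw [div_le_one (by positivity)]
    nlinarith
  · refine le_trans ?_ a1
    gcongr
    linarith
  · refine le_trans ?_ b1
    have : (X : ℚ) / (w ^ 2 * v) ≤ 2 * X / (w * v) / 4 := by
      rw [div_div, div_le_div_iff₀ (by positivity) (by positivity)]
      have : 0 ≤ (X : ℚ) * (w * v) * (w - 2) := by
        apply mul_nonneg (by positivity); linarith
      nlinarith
    linarith
end

section
/- Let q > 0 and let A₁, …, A_q, S, T, R be integers with S ≠ 0. Set X_q := 1 + A₁² + ⋯ + A_q² and define M_q(A₁, …, A_q, S, T, R, n) := ∏_{(ε₁,…,ε_q) ∈ {−1,1}^q} (S²n + T² − S²(2R − 1)(T² + X_q^q + Σ_{j=1}^q ε_j·√(A_j)·X_q^{j−1})), where √(A_j) denotes a fixed complex square root of A_j (the product is independent of the choices and is an integer-valued polynomial expression in the A_j, S, T, R, n). Then the following are equivalent: (i) S divides T, R > 0, and each of A₁, …, A_q is a perfect square; (ii) there exists n ∈ ℕ with M_q(A₁, …, A_q, S, T, R, n) = 0. -/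
/-- `X_q := 1 + A₁² + ⋯ + A_q²` (as a complex number). -/
noncomputable def Xq (q : ℕ) (A : Fin q → ℤ) : ℂ := 1 + ∑ j, (A j : ℂ) ^ 2

/-- The Matiyasevich–Robinson relation-combining expression
`M_q(A₁, …, A_q, S, T, R, n)`: the product over all sign vectors
`(ε₁, …, ε_q) ∈ {−1, 1}^q` (encoded by `ε : Fin q → Bool`) of
`S²n + T² − S²(2R − 1)(T² + X_q^q + ∑_j ε_j·√(A_j)·X_q^{j−1})`,
where `√(A_j)` is the complex square root `(A_j)^{1/2}`. -/
noncomputable def Mq (q : ℕ) (A : Fin q → ℤ) (S T R : ℤ) (n : ℕ) : ℂ :=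
  ∏ ε : Fin q → Bool,
    ((S : ℂ) ^ 2 * (n : ℂ) + (T : ℂ) ^ 2 - (S : ℂ) ^ 2 * (2 * (R : ℂ) - 1) *
      ((T : ℂ) ^ 2 + (Xq q A) ^ q +
        ∑ j : Fin q, (if ε j then 1 else -1) * (A j : ℂ) ^ ((1 : ℂ) / 2)
          * (Xq q A) ^ (j : ℕ)))

lemma rc_norm_bound (x : ℤ) (hx : 1 ≤ x) : ∀ (q : ℕ) (c : Fin q → ℂ),
    (∀ j, ‖c j‖ ≤ (x : ℝ) - 1) →
    ‖∑ j : Fin q, c j * (x : ℂ) ^ (j : ℕ)‖ ≤ (x : ℝ) ^ q - 1 := by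
  intro q
  have hx0 : (1 : ℝ) ≤ x := by exact_mod_cast hx
  induction q with
  | zero => intro c _; simp
  | succ q ih =>
    intro c hc
    rw [Fin.sum_univ_castSucc]
    have h1 := ih (fun j => c j.castSucc) (fun j => hc _)
    have h2 : ‖c (Fin.last q) * (x : ℂ) ^ q‖ ≤ ((x : ℝ) - 1) * (x : ℝ) ^ q := by
      rw [norm_mul, norm_pow, Complex.norm_intCast, abs_of_nonneg (by linarith)]
      exact mul_le_mul_of_nonneg_right (hc _) (by positivity)
    refine (norm_add_le _ _).trans ?_
    simp only [Fin.val_castSucc, Fin.val_last]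
    have h3 : (x : ℝ) ^ (q + 1) = (x : ℝ) ^ q * x := pow_succ _ _

    nlinarith [h1, h2, h3]

lemma rc_zero (x : ℤ) (hx : 1 ≤ x) : ∀ (q : ℕ) (c : Fin q → ℂ),
    (∀ j, ‖c j‖ ≤ (x : ℝ) - 1) → (∀ j, c j = 0 ∨ 1 ≤ ‖c j‖) →
    ∑ j : Fin q, c j * (x : ℂ) ^ (j : ℕ) = 0 → ∀ j, c j = 0 := by
  intro q
  have hx0 : (1 : ℝ) ≤ x := by exact_mod_cast hx
  induction q with
  | zero => intro c _ _ _ j; exact j.elim0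
  | succ q ih =>
    intro c hc hc1 hs
    rw [Fin.sum_univ_castSucc] at hs
    have h1 := rc_norm_bound x hx q (fun j => c j.castSucc) (fun j => hc _)
    simp only [Fin.val_castSucc, Fin.val_last] at hs
    have hl : c (Fin.last q) = 0 := by
      rcases hc1 (Fin.last q) with h | h
      · exact h
      · exfalso
        have h2 : (x : ℝ) ^ q ≤ ‖c (Fin.last q) * (x : ℂ) ^ q‖ := by
          rw [norm_mul, norm_pow, Complex.norm_intCast, abs_of_nonneg (by linarith)]
          exact le_mul_of_one_le_left (by positivity) h
        have h3 := eq_neg_of_add_eq_zero_right hs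
        rw [h3, norm_neg] at h2
        linarith
    rw [hl, zero_mul, add_zero] at hs
    have h4 := ih (fun j => c j.castSucc) (fun j => hc _) (fun j => hc1 _) hs
    intro j
    induction j using Fin.lastCases with
    | last => exact hl
    | cast j => exact h4 j

lemma rc_norm_sq (a X : ℤ) (t : ℂ) (ht : t ^ 2 = a) (haX : a ^ 2 ≤ X - 1) :
    ‖t‖ ≤ (X : ℝ) - 1 ∧ (t = 0 ∨ 1 ≤ ‖t‖) := by
  have h : ‖t‖ ^ 2 = |(a : ℝ)| := by
    rw [← norm_pow, ht, Complex.norm_intCast]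
  have hX : (a : ℝ) ^ 2 ≤ X - 1 := by exact_mod_cast haX
  by_cases ha : a = 0
  · subst ha
    have : t = 0 := by simpa using ht
    subst this
    simp at hX ⊢
    exact hX
  · have h1 : (1 : ℝ) ≤ |(a : ℝ)| := by exact_mod_cast Int.one_le_abs ha
    have h0 := norm_nonneg t
    have h2 : 1 ≤ ‖t‖ := by nlinarith
    have h3 := sq_abs (a : ℝ)
    exact ⟨by nlinarith, Or.inr h2⟩

lemma rc_rational (q : ℕ) (A : Fin q → ℤ) (X : ℤ) (hX : 1 ≤ X)
    (hA : ∀ j, A j ^ 2 ≤ X - 1) (s : Fin q → ℂ) (hs : ∀ j, s j ^ 2 = A j) (r : ℚ)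
    (hr : ∑ j : Fin q, s j * (X : ℂ) ^ (j : ℕ) = r) : ∀ j, ∃ m : ℤ, s j = m := by
  let K := algebraicClosure ℚ ℂ
  have : IsAlgClosure ℚ K := algebraicClosure.isAlgClosure ℚ ℂ
  have : Normal ℚ K := IsAlgClosure.normal ℚ K
  have : IsGalois ℚ K := {}
  have hint : ∀ j, s j ∈ K := fun j => by
    rw [mem_algebraicClosure_iff]
    refine IsIntegral.isAlgebraic (IsIntegral.of_pow (n := 2) (by norm_num) ?_)
    rw [hs j]
    simpa using isIntegral_algebraMap (R := ℚ) (A := ℂ) (x := (A j : ℚ))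
  let t : Fin q → K := fun j => ⟨s j, hint j⟩
  have ht : ∀ j, t j ^ 2 = (A j : K) := fun j => by
    apply Subtype.ext
    simpa using hs j
  have hrt : ∑ j : Fin q, t j * (X : K) ^ (j : ℕ) = (r : K) := by
    apply Subtype.ext
    simpa using hr
  have hfix : ∀ (σ : K ≃ₐ[ℚ] K) j, σ (t j) = t j := by
    intro σ
    have hσ := congrArg σ hrt
    simp only [map_sum, map_mul, map_pow, map_intCast, map_ratCast] at hσ
    have hd : ∑ j : Fin q, ((σ (t j) - t j) / 2) * (X : K) ^ (j : ℕ) = 0 := by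
      have : ∑ j : Fin q, ((σ (t j) - t j) / 2) * (X : K) ^ (j : ℕ)
          = (∑ j : Fin q, σ (t j) * (X : K) ^ (j : ℕ) - ∑ j : Fin q, t j * (X : K) ^ (j : ℕ)) / 2 := by
        rw [← Finset.sum_sub_distrib, Finset.sum_div]
        exact Finset.sum_congr rfl fun j _ => by ring
      rw [this, hσ, hrt]; simp
    have hcase : ∀ j, (σ (t j) - t j) / 2 = 0 ∨ (σ (t j) - t j) / 2 = - t j := by
      intro j
      have h := congrArg σ (ht j)
      rw [map_pow, map_intCast, ← ht j] at h
      rcases sq_eq_sq_iff_eq_or_eq_neg.mp h with h | h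
      · left; rw [h]; simp
      · right; rw [h]; ring
    have hcaseC : ∀ j, (((σ (t j) - t j) / 2 : K) : ℂ) = 0 ∨
        (((σ (t j) - t j) / 2 : K) : ℂ) = - s j := by
      intro j
      rcases hcase j with h | h
      · left; rw [h]; rfl
      · right; rw [h]; rfl
    have hX' : (1 : ℝ) ≤ X := by exact_mod_cast hX
    have hz := rc_zero X hX q (fun j => (((σ (t j) - t j) / 2 : K) : ℂ))
      (fun j => by
        rcases hcaseC j with h | h
        · simp only [h, norm_zero]; linarith
        · simp only [h, norm_neg]; exact (rc_norm_sq _ _ _ (hs j) (hA j)).1)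
      (fun j => by
        rcases hcaseC j with h | h
        · exact Or.inl h
        · simp only [h, norm_neg, neg_eq_zero]; exact (rc_norm_sq _ _ _ (hs j) (hA j)).2)
      (by simpa using congrArg (fun z : K => (z : ℂ)) hd)
    intro j
    have h : (σ (t j) - t j) / 2 = 0 := Subtype.ext (hz j)
    have h2 : σ (t j) - t j = 0 := by
      rcases div_eq_zero_iff.mp h with h | h
      · exact h
      · exact absurd h two_ne_zero
    exact sub_eq_zero.mp h2
  intro j
  have hb : t j ∈ (⊥ : IntermediateField ℚ K) :=
    (InfiniteGalois.mem_bot_iff_fixed (t j)).mpr (fun σ => hfix σ j)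
  obtain ⟨y, hy⟩ := IntermediateField.mem_bot.mp hb
  have hy' : s j = (y : ℂ) := by
    have := congrArg (fun z : K => (z : ℂ)) hy
    simpa [t] using this.symm
  have hy2 : y ^ 2 = (A j : ℚ) := by
    have := hs j
    rw [hy'] at this
    exact_mod_cast this
  have hyi : IsIntegral ℤ y := by
    refine IsIntegral.of_pow (n := 2) (by norm_num) ?_
    rw [hy2]
    simpa using isIntegral_algebraMap (R := ℤ) (A := ℚ) (x := A j)
  obtain ⟨m, hm⟩ := IsIntegrallyClosed.isIntegral_iff.mp hyi
  refine ⟨m, ?_⟩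
  rw [hy', ← hm]
  simp

/-- **Relation combining (Matiyasevich–Robinson).** For `q > 0` and integers
`A₁, …, A_q, S, T, R` with `S ≠ 0`: `S ∣ T`, `R > 0` and all `A_j` perfect
squares hold simultaneously iff `M_q(A₁, …, A_q, S, T, R, n) = 0` for some
`n ∈ ℕ`. -/
theorem relation_combining (q : ℕ) (hq : 0 < q) (A : Fin q → ℤ) (S T R : ℤ)
    (hS : S ≠ 0) :
    (S ∣ T ∧ 0 < R ∧ ∀ j, ∃ m : ℤ, A j = m ^ 2) ↔
      ∃ n : ℕ, Mq q A S T R n = 0 := by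
  classical
  set X : ℤ := 1 + ∑ j, (A j) ^ 2 with hXdef
  have hXq : Xq q A = (X : ℂ) := by simp [Xq, hXdef]
  have hA : ∀ j, A j ^ 2 ≤ X - 1 := fun j => by
    have := Finset.single_le_sum (f := fun j => A j ^ 2) (fun i _ => sq_nonneg (A i))
      (Finset.mem_univ j)

    linarith
  have hX : 1 ≤ X := by
    have : 0 ≤ ∑ j, A j ^ 2 := Finset.sum_nonneg fun i _ => sq_nonneg (A i)
    linarith
  have hsq : ∀ j, ((A j : ℂ) ^ ((1 : ℂ) / 2)) ^ 2 = A j := fun j => by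
    have := Complex.cpow_nat_inv_pow (A j : ℂ) (n := 2) (by norm_num)
    simpa using this
  have hW : ∀ m : Fin q → ℤ, (∀ j, m j ^ 2 = A j) →
      1 ≤ X ^ q + ∑ j : Fin q, m j * X ^ (j : ℕ) := by
    intro m hm
    have h := rc_norm_bound X hX q (fun j => (m j : ℂ)) (fun j =>
      (rc_norm_sq (A j) X _ (by exact_mod_cast hm j) (hA j)).1)
    have h2 : ∑ j : Fin q, (m j : ℂ) * (X : ℂ) ^ (j : ℕ)
      = ((∑ j : Fin q, m j * X ^ (j : ℕ) : ℤ) : ℂ) := by push_cast; rfl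
    rw [h2, Complex.norm_intCast] at h
    have h3 : |∑ j : Fin q, m j * X ^ (j : ℕ)| ≤ X ^ q - 1 := by exact_mod_cast h
    have := (abs_le.mp h3).1
    linarith
  have hsqε : ∀ (ε : Fin q → Bool) j,
      ((if ε j then 1 else -1) * (A j : ℂ) ^ ((1 : ℂ) / 2)) ^ 2 = A j := by
    intro ε j
    rw [mul_pow, hsq j]
    split_ifs <;> simp
  constructor
  · rintro ⟨⟨U, hU⟩, hR, hm⟩
    have hm' : ∀ j, ∃ m : ℤ, m ^ 2 = A j ∧ (A j : ℂ) ^ ((1 : ℂ) / 2) = m := by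
      intro j
      obtain ⟨m, hm⟩ := hm j
      have h := hsq j
      have h1 : (A j : ℂ) = (m : ℂ) ^ 2 := by rw [hm]; push_cast; rfl
      have h2 : ((A j : ℂ) ^ ((1 : ℂ) / 2)) ^ 2 = (m : ℂ) ^ 2 := h.trans h1
      rcases sq_eq_sq_iff_eq_or_eq_neg.mp h2 with h | h
      · exact ⟨m, hm.symm, h⟩
      · exact ⟨-m, by rw [hm]; ring, by rw [h]; push_cast; rfl⟩
    choose m hm1 hm2 using hm'
    have hw := hW m hm1
    set w := X ^ q + ∑ j : Fin q, m j * X ^ (j : ℕ) with hwdef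
    have hn : 0 ≤ (2 * R - 1) * (T ^ 2 + w) - U ^ 2 := by
      have h1 : U ^ 2 ≤ T ^ 2 := by
        have h0 : 0 < S ^ 2 := by positivity
        have : 1 ≤ S ^ 2 := h0
        rw [hU, mul_pow]
        nlinarith [sq_nonneg U]
      nlinarith [sq_nonneg T]
    obtain ⟨n, hn⟩ := Int.eq_ofNat_of_zero_le hn
    refine ⟨n, ?_⟩
    unfold Mq
    refine Finset.prod_eq_zero (Finset.mem_univ (fun _ => true)) ?_
    simp only [if_true, one_mul, hXq, hm2]
    have hn' : (n : ℂ) = (2 * (R : ℂ) - 1) * ((T : ℂ) ^ 2 +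
        ((X : ℂ) ^ q + ∑ j : Fin q, (m j : ℂ) * (X : ℂ) ^ (j : ℕ))) - (U : ℂ) ^ 2 := by
      have := congrArg (fun z : ℤ => (z : ℂ)) hn
      rw [hwdef] at this
      push_cast at this
      exact this.symm
    have hT : (T : ℂ) = S * U := by rw [hU]; push_cast; rfl
    rw [hn', hT]
    ring
  · rintro ⟨n, hn⟩
    unfold Mq at hn
    obtain ⟨ε, -, hε⟩ := Finset.prod_eq_zero_iff.mp hn
    rw [hXq] at hε
    have hSC : (S : ℂ) ≠ 0 := by exact_mod_cast hS
    have hRZ : 2 * R - 1 ≠ 0 := by omega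
    have hRC : (2 * (R : ℂ) - 1) ≠ 0 := by exact_mod_cast hRZ
    have hrat : ∑ j : Fin q, ((if ε j then 1 else -1) * (A j : ℂ) ^ ((1 : ℂ) / 2))
        * (X : ℂ) ^ (j : ℕ) = (((S ^ 2 * n + T ^ 2) / (S ^ 2 * (2 * R - 1)) - T ^ 2 - X ^ q : ℚ) : ℂ) := by
      push_cast
      have h0 : (S : ℂ) ^ 2 * (2 * (R : ℂ) - 1) ≠ 0 := mul_ne_zero (pow_ne_zero _ hSC) hRC
      rw [sub_sub, eq_sub_iff_add_eq, eq_div_iff h0]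
      linear_combination -hε
    have hint := rc_rational q A X hX hA _ (hsqε ε) _ hrat
    choose m hm using hint
    have hm1 : ∀ j, m j ^ 2 = A j := fun j => by
      have := hsqε ε j
      rw [hm j] at this
      exact_mod_cast this
    have hw := hW m hm1
    simp only [hm] at hε
    have hZ : S ^ 2 * n + T ^ 2 - S ^ 2 * (2 * R - 1) *
        (T ^ 2 + X ^ q + ∑ j : Fin q, m j * X ^ (j : ℕ)) = 0 := by
      exact_mod_cast hε
    set Y := ∑ j : Fin q, m j * X ^ (j : ℕ)
    refine ⟨?_, ?_, fun j => ⟨m j, (hm1 j).symm⟩⟩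
    · rw [← Int.pow_dvd_pow_iff (n := 2) (by norm_num)]
      exact ⟨(2 * R - 1) * (T ^ 2 + X ^ q + Y) - n, by linear_combination hZ⟩
    · by_contra hR
      have hS2 : 0 < S ^ 2 := by positivity
      have h1 : 0 < T ^ 2 + X ^ q + Y := by nlinarith [sq_nonneg T]
      have h2 : 0 < S ^ 2 * (T ^ 2 + X ^ q + Y) := mul_pos hS2 h1
      have h3 : 0 ≤ S ^ 2 * (n : ℤ) := by positivity
      nlinarith [sq_nonneg T]
end

section
/- Given integers X, Y, b, g, h, k, l, w, x, y, define U := 2lXY, V := 4gwY, A := U(V+1), B := 2X+1, C := B + (A−2)h, D := (A²−4)C² + 4, E := C²Dx, F := 4(A²−4)E² + 1, G := 1 + CDF − 2(A+2)(A−2)²E², H := C + BF + (2y−1)CF, I := (G²−1)H² + 1, J := X + 1 + k(U²V − 2). Consider the relations: (R1) D·F·I is a perfect square; (R2) (U⁴V² − 4)J² + 4 is a perfect square; (R3) (2A − 5) divides 3bwC − 2(b²w² − 1); (R4) (C/J − lY)² < 1/(16g²); (R5) (C/J − lY)² < 1/4 (the inequalities in ℚ, with J ≠ 0). Then, for integers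 b ≥ 0, X ≥ 3b, Y ≥ max{b, 2⁸} and g ≥ 1, the following are equivalent: (1) b is a power of 2 and Y divides C(2X, X); (2) there exist integers h, k, l, w, x, y ≥ b satisfying (R1), (R2), (R3) and (R4); (0a) there exist integers h, k, l, w, x, y with l·x ≠ 0 satisfying (R1), (R2), (R3) and (R5). Moreover, the implication (1) ⟹ (2) already holds under the weaker hypothesis X ≥ b. -/
namespace BridgeTheorem

def U (X Y l : ℤ) : ℤ := 2 * l * X * Y
def V (Y g w : ℤ) : ℤ := 4 * g * w * Y
def A (X Y g l w : ℤ) : ℤ := U X Y l * (V Y g w + 1)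
def B (X : ℤ) : ℤ := 2 * X + 1
def C (X Y g h l w : ℤ) : ℤ := B X + (A X Y g l w - 2) * h
def D (X Y g h l w : ℤ) : ℤ := ((A X Y g l w) ^ 2 - 4) * (C X Y g h l w) ^ 2 + 4
def E (X Y g h l w x : ℤ) : ℤ := (C X Y g h l w) ^ 2 * D X Y g h l w * x
def F (X Y g h l w x : ℤ) : ℤ :=
  4 * ((A X Y g l w) ^ 2 - 4) * (E X Y g h l w x) ^ 2 + 1
def G (X Y g h l w x : ℤ) : ℤ :=
  1 + C X Y g h l w * D X Y g h l w * F X Y g h l w x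
    - 2 * (A X Y g l w + 2) * (A X Y g l w - 2) ^ 2 * (E X Y g h l w x) ^ 2
def H (X Y g h l w x y : ℤ) : ℤ :=
  C X Y g h l w + B X * F X Y g h l w x + (2 * y - 1) * C X Y g h l w * F X Y g h l w x
def I (X Y g h l w x y : ℤ) : ℤ :=
  ((G X Y g h l w x) ^ 2 - 1) * (H X Y g h l w x y) ^ 2 + 1
def J (X Y g k l w : ℤ) : ℤ := X + 1 + k * ((U X Y l) ^ 2 * V Y g w - 2)

/-- (R1): `D·F·I` is a perfect square. -/
def R1 (X Y g h l w x y : ℤ) : Prop :=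
  ∃ m : ℤ, D X Y g h l w * F X Y g h l w x * I X Y g h l w x y = m ^ 2

/-- (R2): `(U⁴V² − 4)J² + 4` is a perfect square. -/
def R2 (X Y g k l w : ℤ) : Prop :=
  ∃ m : ℤ, ((U X Y l) ^ 4 * (V Y g w) ^ 2 - 4) * (J X Y g k l w) ^ 2 + 4 = m ^ 2

/-- (R3): `(2A − 5) ∣ 3bwC − 2(b²w² − 1)`. -/
def R3 (b X Y g h l w : ℤ) : Prop :=
  (2 * A X Y g l w - 5) ∣ (3 * b * w * C X Y g h l w - 2 * (b ^ 2 * w ^ 2 - 1))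

/-- (R4): `(C/J − lY)² < 1/(16g²)` in `ℚ`, with `J ≠ 0`. -/
def R4 (X Y g h k l w : ℤ) : Prop :=
  J X Y g k l w ≠ 0 ∧
    ((C X Y g h l w : ℚ) / (J X Y g k l w : ℚ) - (l : ℚ) * (Y : ℚ)) ^ 2
      < 1 / (16 * (g : ℚ) ^ 2)

/-- (R5): `(C/J − lY)² < 1/4` in `ℚ`, with `J ≠ 0`. -/
def R5 (X Y g h k l w : ℤ) : Prop :=
  J X Y g k l w ≠ 0 ∧
    ((C X Y g h l w : ℚ) / (J X Y g k l w : ℚ) - (l : ℚ) * (Y : ℚ)) ^ 2 < 1 / 4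

/-- (1): `b` is a power of 2 and `Y ∣ C(2X, X)`. -/
def Cond1 (b X Y : ℤ) : Prop :=
  (∃ k : ℕ, b = 2 ^ k) ∧ Y ∣ (Nat.choose (2 * X.toNat) X.toNat : ℤ)

/-- (2): there are integers `h, k, l, w, x, y ≥ b` satisfying (R1)–(R4). -/
def Cond2 (b X Y g : ℤ) : Prop :=
  ∃ h k l w x y : ℤ, b ≤ h ∧ b ≤ k ∧ b ≤ l ∧ b ≤ w ∧ b ≤ x ∧ b ≤ y ∧
    R1 X Y g h l w x y ∧ R2 X Y g k l w ∧ R3 b X Y g h l w ∧ R4 X Y g h k l w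

/-- (0a): there are integers `h, k, l, w, x, y` with `l·x ≠ 0` satisfying
(R1), (R2), (R3) and (R5). -/
def Cond0a (b X Y g : ℤ) : Prop :=
  ∃ h k l w x y : ℤ, l * x ≠ 0 ∧
    R1 X Y g h l w x y ∧ R2 X Y g k l w ∧ R3 b X Y g h l w ∧ R5 X Y g h k l w


/-- The Lucas sequence with even parameter `2a`. -/
def P (a : ℤ) : ℕ → ℤ
  | 0 => 0
  | 1 => 1
  | n + 2 => 2 * a * P a (n + 1) - P a n

lemma P_zero (a : ℤ) : P a 0 = 0 := rfl
lemma P_one (a : ℤ) : P a 1 = 1 := rfl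
lemma P_succ (a : ℤ) (n : ℕ) : P a (n + 2) = 2 * a * P a (n + 1) - P a n := rfl

lemma P_eq_yn {a : ℕ} (a1 : 1 < a) (n : ℕ) : P (a : ℤ) n = (Pell.yn a1 n : ℤ) := by
  induction n using Nat.twoStepInduction with
  | zero => simp [P_zero]
  | one => simp [P_one]
  | more n h1 h2 =>
    rw [P_succ, h1, h2]
    have := Pell.yn_succ_succ a1 n
    have h : ((Pell.yn a1 (n+2) + Pell.yn a1 n : ℕ) : ℤ) = ((2 * a) * Pell.yn a1 (n+1) : ℕ) := by
      rw [this]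
    push_cast at h
    linarith

lemma P_neg (a : ℤ) (n : ℕ) : P (-a) n = (-1) ^ (n + 1) * P a n := by
  induction n using Nat.twoStepInduction with
  | zero => simp [P_zero]
  | one => simp [P_one]
  | more n h1 h2 =>
    rw [P_succ, h1, h2, P_succ]
    ring

lemma P_neg_odd (a : ℤ) (n : ℕ) : P (-a) (2 * n + 1) = P a (2 * n + 1) := by
  rw [P_neg]
  have : (-1 : ℤ) ^ (2 * n + 1 + 1) = 1 := by
    rw [show 2 * n + 1 + 1 = 2 * (n + 1) by ring, pow_mul]; simp
  rw [this, one_mul]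

lemma abs_P_neg (a : ℤ) (n : ℕ) : |P (-a) n| = |P a n| := by
  rw [P_neg, abs_mul, abs_pow]; simp

lemma abs_P_abs (a : ℤ) (n : ℕ) : |P |a| n| = |P a n| := by
  rcases abs_choice a with h | h <;> rw [h]
  exact abs_P_neg a n

lemma abs_P_eq_yn (a : ℤ) (a1 : 1 < a.natAbs) (n : ℕ) :
    |P a n| = (Pell.yn a1 n : ℤ) := by
  rw [← abs_P_abs, Int.abs_eq_natAbs a, P_eq_yn a1 n]; simp

lemma P_congr {m a b : ℤ} (h : m ∣ a - b) (n : ℕ) : m ∣ P a n - P b n := by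
  induction n using Nat.twoStepInduction with
  | zero => simp [P_zero]
  | one => simp [P_one]
  | more n h1 h2 =>
    rw [P_succ, P_succ]
    have e : 2 * a * P a (n + 1) - P a n - (2 * b * P b (n + 1) - P b n) =
      2 * a * (P a (n+1) - P b (n+1)) + (a - b) * (2 * P b (n+1)) - (P a n - P b n) := by ring
    rw [e]
    exact dvd_sub (dvd_add (Dvd.dvd.mul_left h2 _) (Dvd.dvd.mul_right h _)) h1

lemma P_at_one (n : ℕ) : P 1 n = n := by
  induction n using Nat.twoStepInduction with
  | zero => simp [P_zero]
  | one => simp [P_one]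
  | more n h1 h2 =>
    rw [P_succ, h1, h2]; push_cast; ring

lemma P_sub (a : ℤ) (n : ℕ) : a - 1 ∣ P a n - n := by
  have := P_congr (m := a - 1) (a := a) (b := 1) dvd_rfl n
  rwa [P_at_one] at this

/-- strengthened congruence modulo `2(a-1)`. -/
lemma P_sub_two (a : ℤ) (n : ℕ) : 2 * (a - 1) ∣ P a n - n := by
  induction n using Nat.twoStepInduction with
  | zero => simp [P_zero]
  | one => simp [P_one]
  | more n h1 h2 =>
    rw [P_succ]
    have e : 2 * a * P a (n + 1) - P a n - ((n + 2 : ℕ) : ℤ) =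
      2 * (a - 1) * P a (n + 1) + 2 * (P a (n + 1) - ((n + 1 : ℕ) : ℤ)) - (P a n - (n : ℤ)) := by
      push_cast; ring
    rw [e]
    exact dvd_sub (dvd_add (dvd_mul_right _ _) (Dvd.dvd.mul_left h2 _)) h1

lemma P_pell (a : ℤ) (n : ℕ) : ∃ z : ℤ, (a ^ 2 - 1) * (P a n) ^ 2 + 1 = z ^ 2 := by
  suffices h : ∀ n : ℕ, (P a (n+1))^2 - 2 * a * P a (n+1) * P a n + (P a n)^2 = 1 by
    refine ⟨P a (n+1) - a * P a n, ?_⟩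
    have := h n
    linear_combination -this
  intro n
  induction n with
  | zero => simp [P_zero, P_one]
  | succ n ih => rw [P_succ]; linear_combination ih

lemma pell_sol (a : ℤ) (a1 : 1 < a.natAbs) (c s : ℤ) (h : (a ^ 2 - 1) * c ^ 2 + 1 = s ^ 2) :
    ∃ n, |c| = (Pell.yn a1 n : ℤ) ∧ |s| = (Pell.xn a1 n : ℤ) := by
  have h1 : s.natAbs * s.natAbs - (a.natAbs * a.natAbs - 1) * c.natAbs * c.natAbs = 1 := by
    have hh : s.natAbs * s.natAbs = (a.natAbs * a.natAbs - 1) * c.natAbs * c.natAbs + 1 := by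
      have : 1 ≤ a.natAbs * a.natAbs := by nlinarith
      zify [this]
      rw [abs_mul_abs_self, abs_mul_abs_self, mul_assoc, abs_mul_abs_self]
      linear_combination -h
    omega
  obtain ⟨n, hn1, hn2⟩ := Pell.eq_pell a1 h1
  exact ⟨n, by rw [← hn2]; simp, by rw [← hn1]; simp⟩

lemma pell_sol4 (a : ℤ) (a1 : 1 < a.natAbs) (c s : ℤ)
    (h : ((2 * a) ^ 2 - 4) * c ^ 2 + 4 = s ^ 2) :
    ∃ n, |c| = (Pell.yn a1 n : ℤ) := by
  have : (2 : ℤ) ∣ s ^ 2 := ⟨2 * ((a ^ 2 - 1) * c ^ 2 + 1), by rw [← h]; ring⟩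
  obtain ⟨t, rfl⟩ := Int.prime_two.dvd_of_dvd_pow this
  obtain ⟨n, hn, -⟩ := pell_sol a a1 c t (by linarith)
  exact ⟨n, hn⟩

lemma P_bounds (a : ℤ) (ha : 1 ≤ a) (n : ℕ) :
    (2 * a - 1) ^ n ≤ P a (n + 1) ∧ P a (n + 1) ≤ (2 * a) ^ n := by
  have h : ∀ n : ℕ, 0 ≤ P a n ∧ P a n ≤ P a (n + 1) := by
    intro n
    induction n with
    | zero => simp [P_zero, P_one]
    | succ n ih =>
      refine ⟨by linarith [ih.1, ih.2], ?_⟩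
      rw [P_succ]; nlinarith [ih.1, ih.2]
  induction n with
  | zero => simp [P_one]
  | succ n ih =>
    rw [P_succ, pow_succ, pow_succ]
    have h1 := h n
    constructor
    · nlinarith [ih.1]
    · nlinarith [ih.2]

lemma abs_P_bounds (a : ℤ) (ha : 1 ≤ |a|) (n : ℕ) :
    (2 * |a| - 1) ^ n ≤ |P a (n + 1)| ∧ |P a (n + 1)| ≤ (2 * |a|) ^ n := by
  have := P_bounds |a| ha n
  have h0 : (0:ℤ) ≤ (2 * |a| - 1) ^ n := pow_nonneg (by linarith) _
  have e : |P a (n + 1)| = P |a| (n + 1) := by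
    rw [← abs_P_abs a, abs_of_nonneg (h0.trans this.1)]
  rw [e]
  exact this

lemma P_exp (a : ℤ) (n : ℕ) : 2 * (2 * a) - 5 ∣ 3 * 2 ^ n * P a n - 2 * (4 ^ n - 1) := by
  induction n using Nat.twoStepInduction with
  | zero => simp [P_zero]
  | one => simp [P_one]
  | more n h1 h2 =>
    have e : 3 * 2 ^ (n+2) * P a (n+2) - 2 * (4 ^ (n+2) - 1) =
      (2 * (2 * a) - 5) * (3 * 2 ^ (n+1) * P a (n+1)) + 5 * (3 * 2 ^ (n+1) * P a (n+1) - 2 * (4 ^ (n+1) - 1))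
        - 4 * (3 * 2 ^ n * P a n - 2 * (4 ^ n - 1)) := by
      rw [P_succ]; ring
    rw [e]
    exact dvd_sub (dvd_add (dvd_mul_right _ _) (Dvd.dvd.mul_left h2 _)) (Dvd.dvd.mul_left h1 _)

lemma exp_dvd (a q : ℤ) (n : ℕ) (h : 2 * (2 * a) - 5 ∣ 3 * q * P a n - 2 * (q ^ 2 - 1)) :
    2 * (2 * a) - 5 ∣ 2 * ((2 ^ n - q) * (2 ^ n * q + 1)) := by
  have h1 := P_exp a n
  have e : 2 * ((2 ^ n - q) * (2 ^ n * q + 1)) =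
     2 ^ n * (3 * q * P a n - 2 * (q ^ 2 - 1)) - q * (3 * 2 ^ n * P a n - 2 * (4 ^ n - 1)) := by
    have : (4:ℤ)^n = 2^n * 2^n := by rw [← mul_pow]; norm_num
    rw [this]; ring
  rw [e]
  exact dvd_sub (Dvd.dvd.mul_left h _) (Dvd.dvd.mul_left h1 _)



lemma sq_of_coprime_pos {a b c : ℤ} (ha : 0 < a) (h : IsCoprime a b) (e : a * b = c ^ 2) :
    ∃ z, a = z ^ 2 := by
  obtain ⟨z, hz | hz⟩ := Int.sq_of_isCoprime h e
  · exact ⟨z, hz⟩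
  · exfalso; nlinarith [sq_nonneg z]

/-- second step-down lemma, in squared form -/
lemma step_down {a : ℕ} (a1 : 1 < a) {r m n : ℕ} (hm : 0 < m) (hmn : 2 * m ≤ n)
    (h : (Pell.xn a1 n : ℤ) ∣ (Pell.yn a1 r : ℤ) ^ 2 - (Pell.yn a1 m : ℤ) ^ 2) :
    (2 * n : ℤ) ∣ r - m ∨ (2 * n : ℤ) ∣ r + m := by
  have hx : ∀ k, (Pell.xn a1 (2 * k) : ℤ) = 2 * ((a : ℤ) * a - 1) * (Pell.yn a1 k : ℤ) ^ 2 + 1 := by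
    intro k
    have h1 := Pell.pell_eqz a1 k
    rw [two_mul k, Pell.xn_add]
    push_cast
    rw [Pell.dz_val] at h1 ⊢
    unfold Pell.xz Pell.yz at h1
    unfold Pell.az at h1 ⊢
    linear_combination h1
  have h2 : Pell.xn a1 (2 * r) ≡ Pell.xn a1 (2 * m) [MOD Pell.xn a1 n] := by
    rw [← Int.natCast_modEq_iff]
    apply Int.ModEq.symm
    rw [Int.modEq_iff_dvd, hx, hx]
    have e : (2 * ((a : ℤ) * a - 1) * (Pell.yn a1 r : ℤ) ^ 2 + 1 - (2 * ((a : ℤ) * a - 1) * (Pell.yn a1 m : ℤ) ^ 2 + 1))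
      = 2 * ((a : ℤ) * a - 1) * ((Pell.yn a1 r : ℤ) ^ 2 - (Pell.yn a1 m : ℤ) ^ 2) := by ring
    rw [e]
    exact Dvd.dvd.mul_left h _
  rcases Pell.modEq_of_xn_modEq a1 (by omega) hmn h2 with h3 | h3
  · left
    have := (Nat.modEq_iff_dvd.1 h3.symm)
    push_cast at this
    obtain ⟨t, ht⟩ := this
    exact ⟨t, by linarith⟩
  · right
    have := (Nat.modEq_zero_iff_dvd.1 h3)
    obtain ⟨t, ht⟩ := this
    refine ⟨t, ?_⟩
    have ht' : ((2 * r + 2 * m : ℕ) : ℤ) = ((4 * n * t : ℕ) : ℤ) := by rw [ht]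
    push_cast at ht'
    linarith

lemma two_mul_le_yn {a : ℕ} (a1 : 1 < a) {k : ℕ} (h : 1 < k) : 2 * k ≤ Pell.yn a1 k := by
  obtain ⟨k, rfl⟩ : ∃ j, k = j + 2 := ⟨k - 2, by omega⟩
  rw [Pell.yn_succ]
  have e1 := Pell.yn_ge_n a1 (k+1)
  have e2 := Pell.n_lt_xn a1 (k+1)
  have : (k + 1) * 2 ≤ Pell.yn a1 (k+1) * a := Nat.mul_le_mul e1 a1
  omega

lemma dvd_abs_choice {z p t : ℤ} {M : ℤ} (h : |z| = |p|) (hp : M ∣ p - t) :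
    M ∣ z - t ∨ M ∣ z + t := by
  rcases abs_eq_abs.1 h with h | h
  · left; rwa [h]
  · right; rw [h]
    have : -p + t = -(p - t) := by ring
    rw [this]; exact (dvd_neg.2 hp)

set_option maxHeartbeats 1600000 in
lemma R1_fwd (a C D E F G H I x y m : ℤ) (B : ℕ)
    (hD : D = ((2 * a) ^ 2 - 4) * C ^ 2 + 4) (hE : E = C ^ 2 * D * x)
    (hF : F = 4 * ((2 * a) ^ 2 - 4) * E ^ 2 + 1)
    (hG : G = 1 + C * D * F - 2 * (2 * a + 2) * (2 * a - 2) ^ 2 * E ^ 2)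
    (hH : H = C + B * F + (2 * y - 1) * C * F)
    (hI : I = (G ^ 2 - 1) * H ^ 2 + 1)
    (hm : D * F * I = m ^ 2) (hx : x ≠ 0) (ha : 2 ≤ |a|) (hB : 2 ≤ B) (hC : (B : ℤ) ≤ |C|) :
    |C| = |P a B| := by
  have ha2 : 4 ≤ a ^ 2 := by rw [← sq_abs]; nlinarith
  have hC0 : C ≠ 0 := by rintro rfl; simp at hC; omega
  have hC2 : 0 < C ^ 2 := by positivity
  have hDpos : 0 < D := by rw [hD]; nlinarith
  have hE0 : E ≠ 0 := by
    rw [hE]; exact mul_ne_zero (mul_ne_zero hC2.ne' hDpos.ne') hx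
  have hE2 : 1 ≤ E ^ 2 := by
    have : 0 < E ^ 2 := by positivity
    omega
  have hFbig : 16 * a ^ 2 - 16 + 1 ≤ F := by rw [hF]; nlinarith
  have hFpos : 0 < F := by linarith
  have hGa : G - a = F * (C * D - a + 1) := by
    have : 2 * (G - a) = 2 * (F * (C * D - a + 1)) := by
      rw [hG]
      linear_combination (2 * a - 2) * hF
    linarith
  have hG2 : 1 < G.natAbs := by
    by_contra hcon
    have h1 : |G| ≤ 1 := by rw [Int.abs_eq_natAbs]; omega
    have h2 : F ∣ G - a := ⟨_, hGa⟩
    have h3 : |G - a| < F := by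
      have : |G - a| ≤ |G| + |a| := abs_sub _ _
      have h4 : |a| ^ 2 = a ^ 2 := sq_abs a
      nlinarith
    have h5 := Int.eq_zero_of_abs_lt_dvd h2 h3
    have h6 : G = a := by linarith
    rw [h6] at h1; linarith
  -- coprimality
  have hDF : IsCoprime D F := by
    refine ⟨-(4 * ((2 * a) ^ 2 - 4) * (C ^ 2 * x) ^ 2 * D), 1, ?_⟩
    rw [hF, hE]; ring
  have hG1D : G - 1 = D * (C * F - 2 * (2 * a + 2) * (2 * a - 2) ^ 2 * C ^ 2 * x * E) := by
    have := hE
    linear_combination hG - 2 * (2 * a + 2) * (2 * a - 2) ^ 2 * E * hE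
  have hDI : IsCoprime D I := by
    set t := (C * F - 2 * (2 * a + 2) * (2 * a - 2) ^ 2 * C ^ 2 * x * E)
    refine ⟨-(t * (G + 1) * H ^ 2), 1, ?_⟩
    rw [hI]
    linear_combination (G + 1) * H ^ 2 * hG1D
  have hFD' : ∃ s, 4 * I = D + F * s := by
    have hGa' : G = a + F * (C * D - a + 1) := by linarith
    have hH' : H = C + F * (B + (2 * y - 1) * C) := by rw [hH]; ring
    set t := C * D - a + 1
    set u := (B : ℤ) + (2 * y - 1) * C
    refine ⟨4 * ((2 * a * t + F * t ^ 2) * H ^ 2 + (a ^ 2 - 1) * (2 * C * u + F * u ^ 2)), ?_⟩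
    rw [hI, hD, hGa', hH']; ring
  have hFI : IsCoprime F I := by
    obtain ⟨s, hs⟩ := hFD'
    have : IsCoprime F (4 * I) := by
      rw [hs]; exact (IsCoprime.add_mul_left_right_iff).2 hDF.symm
    exact this.of_mul_right_right
  have hIpos : 0 < I := by
    rw [hI]
    have : 1 ≤ G ^ 2 := by
      have : G ≠ 0 := by rintro rfl; simp at hG2
      have : 0 < G ^ 2 := by positivity
      omega
    nlinarith [sq_nonneg H]
  obtain ⟨d, hd⟩ := sq_of_coprime_pos hDpos (hDF.mul_right hDI) (by rw [← hm]; ring)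
  obtain ⟨f, hf⟩ := sq_of_coprime_pos hFpos (hDF.symm.mul_right hFI) (c := m) (by rw [← hm]; ring)
  obtain ⟨i, hi⟩ := sq_of_coprime_pos hIpos (hDI.symm.mul_right hFI.symm) (c := m) (by rw [← hm]; ring)
  have a1 : 1 < a.natAbs := by rw [Int.abs_eq_natAbs] at ha; omega
  obtain ⟨mm, hmm⟩ := pell_sol4 a a1 C d (by rw [← hd, hD])
  obtain ⟨n, hn1, hn2⟩ := pell_sol a a1 (4 * E) f (by rw [← hf, hF]; ring)
  obtain ⟨r, hr, -⟩ := pell_sol G hG2 H i (by rw [← hi, hI])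
  -- divisibility
  have hCn : Pell.yn a1 mm ∣ n := by
    apply Pell.dvd_of_ysq_dvd
    zify
    rw [← hmm, ← hn1, abs_mul_abs_self, dvd_abs, hE]
    exact ⟨4 * D * x, by ring⟩
  have hmm0 : 0 < mm := by
    rcases Nat.eq_zero_or_pos mm with h | h
    · subst h; simp at hmm; exact absurd hmm hC0
    · exact h
  have hn0 : 0 < n := by
    rcases Nat.eq_zero_or_pos n with h | h
    · subst h; simp at hn1; exact absurd hn1 hE0
    · exact h
  have hmmC : (mm : ℤ) ≤ |C| := by rw [hmm]; exact_mod_cast Pell.yn_ge_n a1 mm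
  have h2mn : 2 * mm ≤ n := by
    have h1 : Pell.yn a1 mm ≤ n := Nat.le_of_dvd hn0 hCn
    have h2 : 2 * mm ≤ Pell.yn a1 mm ∨ mm ≤ 1 := by
      rcases Nat.lt_or_ge 1 mm with h | h
      · left; exact two_mul_le_yn a1 h
      · right; exact h
    rcases h2 with h2 | h2
    · omega
    · have : (2:ℤ) ≤ |C| := by
        have : (2:ℤ) ≤ B := by exact_mod_cast hB
        linarith
      rw [hmm] at this
      have : 2 ≤ Pell.yn a1 mm := by exact_mod_cast this
      omega
  have hfx : (Pell.xn a1 n : ℤ) ∣ F := by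
    rw [← hn2, hf]; exact (abs_dvd _ _).2 (dvd_pow_self f two_ne_zero)
  have hsq : (Pell.xn a1 n : ℤ) ∣ (Pell.yn a1 r : ℤ) ^ 2 - (Pell.yn a1 mm : ℤ) ^ 2 := by
    rw [← abs_P_eq_yn a a1, ← hmm, sq_abs, sq_abs]
    have h1 : F ∣ P G r - P a r := P_congr ⟨_, hGa⟩ r
    have h2 : H ^ 2 = (P G r) ^ 2 := by
      rw [← sq_abs, hr, ← abs_P_eq_yn, sq_abs]
    have h3 : F ∣ H - C := ⟨B + (2 * y - 1) * C, by rw [hH]; ring⟩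
    have h4 : P a r ^ 2 - C ^ 2 = (H - C) * (H + C) - (P G r - P a r) * (P G r + P a r) := by
      linear_combination -h2
    rw [h4]
    exact hfx.trans (dvd_sub (Dvd.dvd.mul_right h3 _) (Dvd.dvd.mul_right h1 _))
  have hstep := step_down a1 hmm0 h2mn hsq
  have h2C : 2 * C ∣ 2 * (n : ℤ) := by
    apply mul_dvd_mul_left
    rw [← abs_dvd, hmm]
    exact_mod_cast hCn
  have hD' : D = 2 * (2 * ((a ^ 2 - 1) * C ^ 2 + 1)) := by rw [hD]; ring
  have hG2C : 2 * C ∣ G - 1 := by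
    refine ⟨(2 * ((a ^ 2 - 1) * C ^ 2 + 1)) * F - (2 * a + 2) * (2 * a - 2) ^ 2 * E * C * D * x, ?_⟩
    linear_combination hG - 2 * (2 * a + 2) * (2 * a - 2) ^ 2 * E * hE + C * F * hD'
  have hF2C : 2 * C ∣ F - 1 := by
    refine ⟨2 * ((2 * a) ^ 2 - 4) * E * C * D * x, ?_⟩
    linear_combination hF + 4 * ((2 * a) ^ 2 - 4) * E * hE
  have hHB : 2 * C ∣ H - B := by
    have : H - B = (F - 1) * (B - C) + 2 * C * (y * F) := by rw [hH]; ring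
    rw [this]
    exact dvd_add (Dvd.dvd.mul_right hF2C _) (dvd_mul_right _ _)
  have hHr : 2 * C ∣ H - r ∨ 2 * C ∣ H + r := by
    apply dvd_abs_choice (p := P G r)
    · rw [hr, ← abs_P_eq_yn]
    · exact hG2C.trans (P_sub G r)
  have hBm : 2 * C ∣ (B : ℤ) - mm ∨ 2 * C ∣ (B : ℤ) + mm := by
    have key : ∀ s t u : ℤ, 2 * C ∣ s → 2 * C ∣ t → 2 * C ∣ u → ∀ v, (v = s + t + u ∨ v = s + t - u ∨ v = s - t + u ∨ v = s - t - u ∨ v = -s + t + u ∨ v = -s + t - u ∨ v = - s - t + u) → 2 * C ∣ v := by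
      intro s t u hs ht hu v hv
      rcases hv with rfl | rfl | rfl | rfl | rfl | rfl | rfl
      · exact dvd_add (dvd_add hs ht) hu
      · exact dvd_sub (dvd_add hs ht) hu
      · exact dvd_add (dvd_sub hs ht) hu
      · exact dvd_sub (dvd_sub hs ht) hu
      · exact dvd_add (dvd_add (dvd_neg.2 hs) ht) hu
      · exact dvd_sub (dvd_add (dvd_neg.2 hs) ht) hu
      · exact dvd_add (dvd_sub (dvd_neg.2 hs) ht) hu
    rcases hstep with h1 | h1 <;> rcases hHr with h2 | h2
    · left; refine key _ _ _ hHB h2 (h2C.trans h1) _ ?_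
      right; right; right; right; left; ring
    · right; refine key _ _ _ hHB h2 (h2C.trans h1) _ ?_
      right; right; right; right; right; left; ring
    · right; refine key _ _ _ hHB h2 (h2C.trans h1) _ ?_
      right; right; right; right; left; ring
    · left; refine key _ _ _ hHB h2 (h2C.trans h1) _ ?_
      right; right; right; right; right; left; ring
  have hB2 : (2:ℤ) ≤ B := by exact_mod_cast hB
  have hmmB : mm = B := by
    rcases hBm with h | h
    · have h' : 2 * |C| ∣ (B : ℤ) - mm := by
        rcases abs_choice C with e | e <;> rw [e]
        · exact h
        · rw [mul_neg]; exact (neg_dvd.2 h)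
      have := Int.eq_zero_of_abs_lt_dvd h' (by rw [abs_lt]; constructor <;> omega)
      omega
    · have h' : 2 * |C| ∣ (B : ℤ) + mm := by
        rcases abs_choice C with e | e <;> rw [e]
        · exact h
        · rw [mul_neg]; exact (neg_dvd.2 h)
      have := Int.le_of_dvd (by omega) h'
      omega
  rw [hmm, hmmB, ← abs_P_eq_yn]



lemma yn_two_mul {a : ℕ} (a1 : 1 < a) (k : ℕ) :
    Pell.yn a1 (2 * k) = 2 * (Pell.xn a1 k * Pell.yn a1 k) := by
  rw [two_mul k, Pell.yn_add]; ring

lemma pell_id {a : ℕ} (a1 : 1 < a) (k : ℕ) :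
    ((a : ℤ) ^ 2 - 1) * (Pell.yn a1 k : ℤ) ^ 2 + 1 = (Pell.xn a1 k : ℤ) ^ 2 := by
  have h1 := Pell.pell_eqz a1 k
  rw [Pell.dz_val] at h1
  unfold Pell.xz Pell.yz Pell.az at h1
  linear_combination -h1

/-- suitable index for the divisibility condition -/
lemma exists_index {a : ℕ} (a1 : 1 < a) (N : ℕ) (hN : 0 < N) (b : ℕ) :
    ∃ n x : ℕ, b ≤ x ∧ 0 < x ∧
      Pell.yn a1 n = 4 * (Pell.yn a1 N ^ 2 * (4 * Pell.xn a1 N ^ 2) * x) := by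
  set z := Pell.yn a1 (2 * N) with hz
  have hz' : z = 2 * (Pell.xn a1 N * Pell.yn a1 N) := yn_two_mul a1 N
  have hyN : 0 < Pell.yn a1 N := lt_of_lt_of_le hN (Pell.yn_ge_n a1 N)
  have hxN : 0 < Pell.xn a1 N := Pell.x_pos a1 N
  set M := 4 * (Pell.yn a1 N ^ 2 * (4 * Pell.xn a1 N ^ 2)) with hM
  have hMpos : 0 < M := by positivity
  have h1 : M ∣ Pell.yn a1 (2 * (2 * (2 * N * z))) := by
    rw [yn_two_mul, yn_two_mul]
    obtain ⟨t, ht⟩ := Pell.ysq_dvd_yy a1 (2 * N)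
    rw [← hz] at ht
    rw [ht]
    refine ⟨Pell.xn a1 (2 * (2 * N * z)) * Pell.xn a1 (2 * N * z) * t, ?_⟩
    rw [hM]
    have : z * z = Pell.yn a1 N ^ 2 * (4 * Pell.xn a1 N ^ 2) := by rw [hz']; ring
    rw [this]; ring
  set k := 2 * (2 * (2 * N * z)) with hk
  have hzpos : 0 < z := by rw [hz']; positivity
  have hkpos : 0 < k := by positivity
  have h2 : M ∣ Pell.yn a1 (k * (M * (b + 1))) := h1.trans (Pell.y_mul_dvd a1 k _)
  obtain ⟨x, hx⟩ := h2
  have h3 := Pell.yn_ge_n a1 (k * (M * (b + 1)))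
  rw [hx] at h3
  have h4 : b + 1 ≤ x := by
    have : M * (b + 1) ≤ M * x := le_trans (Nat.le_mul_of_pos_left _ hkpos) h3
    exact Nat.le_of_mul_le_mul_left this hMpos
  exact ⟨_, x, by omega, by omega, by rw [hx, hM]; ring⟩

set_option maxHeartbeats 1600000 in
lemma R1_bwd (a : ℤ) (ha : 2 ≤ a) (X : ℕ) (hX : 1 ≤ X) (b C : ℤ) (hb : 0 ≤ b)
    (hC : C = P a (2 * X + 1)) :
    ∃ x y m : ℤ, b ≤ x ∧ b ≤ y ∧ ∀ D E F G H I : ℤ,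
      D = ((2 * a) ^ 2 - 4) * C ^ 2 + 4 → E = C ^ 2 * D * x →
      F = 4 * ((2 * a) ^ 2 - 4) * E ^ 2 + 1 →
      G = 1 + C * D * F - 2 * (2 * a + 2) * (2 * a - 2) ^ 2 * E ^ 2 →
      H = C + (2 * X + 1) * F + (2 * y - 1) * C * F →
      I = (G ^ 2 - 1) * H ^ 2 + 1 → D * F * I = m ^ 2 := by
  obtain ⟨α, rfl⟩ := Int.eq_ofNat_of_zero_le (by linarith : 0 ≤ a)
  obtain ⟨β, rfl⟩ := Int.eq_ofNat_of_zero_le hb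
  have a1 : 1 < α := by omega
  set N := 2 * X + 1 with hN
  rw [P_eq_yn a1] at hC
  obtain ⟨n, x, hbx, hx0, hnx⟩ := exists_index a1 N (by omega) β
  have hCN : (N : ℤ) ≤ C := by rw [hC]; exact_mod_cast Pell.yn_ge_n a1 N
  have hC1 : 1 ≤ C := by omega
  obtain ⟨D, hD⟩ : ∃ D : ℤ, D = ((2 * (α : ℤ)) ^ 2 - 4) * C ^ 2 + 4 := ⟨_, rfl⟩
  obtain ⟨E, hE⟩ : ∃ E : ℤ, E = C ^ 2 * D * x := ⟨_, rfl⟩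
  obtain ⟨F, hF⟩ : ∃ F : ℤ, F = 4 * ((2 * (α : ℤ)) ^ 2 - 4) * E ^ 2 + 1 := ⟨_, rfl⟩
  obtain ⟨G, hG⟩ : ∃ G : ℤ, G = 1 + C * D * F
    - 2 * (2 * (α : ℤ) + 2) * (2 * α - 2) ^ 2 * E ^ 2 := ⟨_, rfl⟩
  have hDx : D = 4 * (Pell.xn a1 N : ℤ) ^ 2 := by
    rw [← pell_id, ← hC, hD]; ring
  have hE4 : 4 * E = Pell.yn a1 n := by
    rw [hnx, hE, hDx, hC]; push_cast; ring
  have hFx : F = (Pell.xn a1 n : ℤ) ^ 2 := by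
    rw [← pell_id, ← hE4, hF]; ring
  have hGa : G - α = F * (C * D - α + 1) := by
    have : 2 * (G - (α : ℤ)) = 2 * (F * (C * D - α + 1)) := by
      rw [hG]
      linear_combination (2 * (α : ℤ) - 2) * hF
    linarith
  have hD' : D = 2 * (2 * (((α:ℤ) ^ 2 - 1) * C ^ 2 + 1)) := by rw [hD]; ring
  have hG2C : 2 * C ∣ G - 1 := by
    refine ⟨(2 * (((α:ℤ) ^ 2 - 1) * C ^ 2 + 1)) * F
      - (2 * α + 2) * (2 * α - 2) ^ 2 * E * C * D * x, ?_⟩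
    linear_combination hG - 2 * (2 * (α:ℤ) + 2) * (2 * α - 2) ^ 2 * E * hE + C * F * hD'
  obtain ⟨t, ht⟩ : 2 * C ∣ F - 1 := by
    refine ⟨2 * ((2 * (α:ℤ)) ^ 2 - 4) * E * C * D * x, ?_⟩
    linear_combination hF + 4 * ((2 * (α:ℤ)) ^ 2 - 4) * E * hE
  have hcop : IsCoprime (2 * C) F := ⟨-t, 1, by linarith⟩
  have hy : 2 * C * F ∣ P G N - C - (2 * X + 1) * F + C * F := by
    apply hcop.mul_dvd
    · have h1 : 2 * C ∣ P G N - N := hG2C.trans (P_sub G N)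
      have e : P G N - C - (2 * X + 1) * F + C * F = (P G N - N) + (F - 1) * (C - N) := by
        rw [hN]; push_cast; ring
      rw [e]
      exact dvd_add h1 (Dvd.dvd.mul_right ⟨t, ht⟩ _)
    · have h1 : F ∣ P G N - P (α : ℤ) N := P_congr ⟨_, hGa⟩ N
      rw [P_eq_yn a1, ← hC] at h1
      have e : P G N - C - (2 * X + 1) * F + C * F = (P G N - C) + F * (C - (2 * X + 1)) := by ring
      rw [e]
      exact dvd_add h1 (dvd_mul_right _ _)
  obtain ⟨y, hy⟩ := hy
  -- bounds
  have hα : (2:ℤ) ≤ α := ha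
  have hC2 : 1 ≤ C ^ 2 := by nlinarith
  have hDbig : 4 * (α : ℤ) ≤ D := by rw [hD]; nlinarith
  have hx1 : (1:ℤ) ≤ x := by exact_mod_cast hx0
  have hCD : 1 ≤ C ^ 2 * D := by nlinarith
  have hEx : (x:ℤ) ≤ E := by rw [hE]; nlinarith
  have hFE : 48 * E ≤ F := by
    have : 12 ≤ (2 * (α : ℤ)) ^ 2 - 4 := by nlinarith
    rw [hF]; nlinarith [mul_le_mul this (le_refl (E^2)) (sq_nonneg E) (by linarith)]
  have hbx' : (β : ℤ) ≤ x := by exact_mod_cast hbx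
  have hF2 : 2 + 2 * (β : ℤ) ≤ F := by linarith
  have hF1 : 1 ≤ F := by linarith
  have hGF : F * C + 1 ≤ G := by
    have h1 : C ≤ C * D - α + 1 := by nlinarith
    have h2 : F * C ≤ F * (C * D - α + 1) := mul_le_mul_of_nonneg_left h1 (by linarith)
    linarith
  have hFC : 1 ≤ F * C := by nlinarith
  have hPG : (F * C) * (F * C) ≤ P G N := by
    have h1 := (P_bounds G (by linarith) (2 * X)).1
    have h2 : (2 * G - 1) ^ 2 ≤ (2 * G - 1) ^ (2 * X) :=
      pow_le_pow_right₀ (by linarith) (by omega)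
    have h3 : (F * C) * (F * C) ≤ (2 * G - 1) ^ 2 := by nlinarith
    rw [hN]; linarith
  have hyb : (β : ℤ) ≤ y := by
    have hCF : 0 < 2 * C * F := by positivity
    have h1 : 2 * C * F * β ≤ 2 * C * F * y := by
      rw [← hy]
      have h2 : (F * C) * (2 + 2 * β) ≤ (F * C) * (F * C) := by
        apply mul_le_mul_of_nonneg_left _ (by linarith)
        nlinarith
      have h3 : (2 * X + 1) * F ≤ C * F := by
        apply mul_le_mul_of_nonneg_right _ (by linarith)
        rw [hN] at hCN; push_cast at hCN; exact hCN
      nlinarith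
    exact le_of_mul_le_mul_left h1 hCF
  obtain ⟨i, hi⟩ := P_pell G N
  refine ⟨x, y, 2 * Pell.xn a1 N * Pell.xn a1 n * i, hbx', hyb, ?_⟩
  intro D1 E1 F1 G1 H1 I1 e1 e2 e3 e4 e5 e6
  rw [← hD] at e1; subst e1
  rw [← hE] at e2; subst e2
  rw [← hF] at e3; subst e3
  rw [← hG] at e4; subst e4
  have e5' : H1 = P G1 N := by rw [e5]; linear_combination -hy
  rw [e5', hi] at e6
  rw [e6, hDx, hFx]; ring



lemma bern (p : ℚ) (hp : 1 ≤ p) (n : ℕ) : p ^ n * (1 - n / p) ≤ (p - 1) ^ n := by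
  have hp0 : 0 < p := by linarith
  have h1 : (1 : ℚ) + n * (-1 / p) ≤ (1 + (-1 / p)) ^ n := by
    apply one_add_mul_le_pow
    have : 1 / p ≤ 1 := by rw [div_le_one hp0]; exact hp
    have e : -1 / p = -(1 / p) := by ring
    rw [e]; linarith
  have e : (p - 1) ^ n = p ^ n * (1 + (-1 / p)) ^ n := by
    rw [← mul_pow]; congr 1; field_simp; ring
  rw [e]
  apply mul_le_mul_of_nonneg_left _ (by positivity)
  calc 1 - n / p = (1 : ℚ) + n * (-1 / p) := by ring
    _ ≤ _ := h1

set_option maxHeartbeats 800000 in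
lemma approx (X : ℕ) (hX : 3 ≤ X) (V U C J g T : ℚ) (hg : 1 ≤ g)
    (hV : 8 * 4 ^ X * g ≤ V) (hU1 : 1 ≤ U) (hU : X * V ^ X ≤ U * 2 ^ X)
    (hC1 : (U * (V + 1) - 1) ^ (2 * X) ≤ C) (hC2 : C ≤ (U * (V + 1)) ^ (2 * X))
    (hJ1 : (U ^ 2 * V - 1) ^ X ≤ J) (hJ2 : J ≤ (U ^ 2 * V) ^ X)
    (hT : T * V ^ X = (V + 1) ^ (2 * X)) :
    0 < J ∧ T - 1 / (8 * g) < C / J ∧ C / J < T + 1 / (8 * g) := by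
  have h2X : (8 : ℚ) ≤ 2 ^ X := by
    calc (8 : ℚ) = 2 ^ 3 := by norm_num
      _ ≤ 2 ^ X := pow_le_pow_right₀ (by norm_num) hX
  have h4X : (4 : ℚ) ^ X = 2 ^ X * 2 ^ X := by rw [← mul_pow]; norm_num
  have hV2 : 64 * 2 ^ X * g ≤ V := by
    refine le_trans ?_ hV
    rw [h4X]
    apply mul_le_mul_of_nonneg_right _ (by linarith)
    nlinarith
  have hXX : (X : ℚ) ≤ 2 ^ X := by
    exact_mod_cast (Nat.lt_two_pow_self (n := X)).le
  have hX3 : (3 : ℚ) ≤ X := by exact_mod_cast hX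
  have hV3 : 64 * 2 ^ X ≤ V := by nlinarith
  have hVX : 64 * (X : ℚ) ≤ V := by linarith
  have hVpos : 0 < V := by linarith
  have hVp : 0 < V ^ X := by positivity
  -- T bounds
  have hT2 : T ≤ 2 * V ^ X := by
    have h1 := bern (V + 1) (by linarith) (2 * X)
    have h2 : (1:ℚ) / 2 ≤ 1 - ((2 * X : ℕ) : ℚ) / (V + 1) := by
      have : ((2 * X : ℕ) : ℚ) / (V + 1) ≤ 1 / 2 := by
        rw [div_le_iff₀ (by linarith)]; push_cast; linarith
      linarith
    have h3 : (V + 1) ^ (2 * X) * (1 / 2) ≤ V ^ (2 * X) := by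
      have h4 : (V + 1) ^ (2 * X) * (1 / 2) ≤ (V + 1) ^ (2 * X) * (1 - ((2 * X : ℕ) : ℚ) / (V + 1)) :=
        mul_le_mul_of_nonneg_left h2 (by positivity)
      have : V + 1 - 1 = V := by ring
      rw [this] at h1
      linarith
    rw [← hT, two_mul X, pow_add] at h3
    have h4 : (T / 2) * V ^ X ≤ V ^ X * V ^ X := by linarith
    have := le_of_mul_le_mul_right h4 hVp
    linarith
  have hTpos : 0 < T := by
    have : 0 < T * V ^ X := by rw [hT]; positivity
    exact pos_of_mul_pos_left this hVp.le
  have hT1 : 1 ≤ T := by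
    have : 1 * V ^ X ≤ T * V ^ X := by
      rw [hT, two_mul X, pow_add, one_mul]
      have e1 : V ^ X ≤ (V + 1) ^ X := pow_le_pow_left₀ hVpos.le (by linarith) X
      have e2 : (1:ℚ) ≤ (V + 1) ^ X := one_le_pow₀ (by linarith)
      nlinarith
    exact le_of_mul_le_mul_right this hVp
  have hTX : T * X ≤ 2 * V ^ X * X := mul_le_mul_of_nonneg_right hT2 (by linarith)
  set p := U ^ 2 * V with hp
  have hU2 : U ≤ U ^ 2 := by nlinarith
  have hpV : V ≤ p := by rw [hp]; nlinarith
  have hpUV : U * V ≤ p := by rw [hp]; nlinarith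
  have hppos : 0 < p := by linarith
  have hpX : 0 < p ^ X := by positivity
  have hAT : (U * (V + 1)) ^ (2 * X) = p ^ X * T := by
    rw [hp, mul_pow, mul_pow (U^2), ← hT, ← pow_mul]; ring
  have hδ : 0 < 1 / (8 * g) := by positivity
  have hJp : p ^ X * (1 - X / p) ≤ J := (bern p (by linarith) X).trans hJ1
  have hXp : X / p ≤ 1 / 2 := by
    rw [div_le_iff₀ hppos]; linarith
  have hJpos : 0 < J := lt_of_lt_of_le (mul_pos hpX (by linarith)) hJp
  refine ⟨hJpos, ?_, ?_⟩
  · rw [lt_div_iff₀ hJpos]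
    have hUV1 : 1 ≤ U * (V + 1) := by nlinarith
    have h1 := (bern (U * (V + 1)) hUV1 (2 * X)).trans hC1
    rw [hAT] at h1
    have h2 : T * (((2 * X : ℕ) : ℚ) / (U * (V + 1))) < 1 / (8 * g) := by
      rw [mul_div_assoc', div_lt_div_iff₀ (by linarith) (by linarith)]
      push_cast
      have e1 : T * (2 * X) ≤ 4 * (U * 2 ^ X) := by linarith
      have e2 : T * (2 * X) * (8 * g) ≤ 4 * (U * 2 ^ X) * (8 * g) :=
        mul_le_mul_of_nonneg_right e1 (by linarith)
      have e3 : 4 * (U * 2 ^ X) * (8 * g) ≤ U * V := by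
        have : U * (32 * 2 ^ X * g) ≤ U * V := by
          apply mul_le_mul_of_nonneg_left _ (by linarith)
          have : 0 < 2 ^ X * g := by positivity
          linarith
        linarith
      linarith
    have h3 : (T - 1 / (8 * g)) * J ≤ (T - 1 / (8 * g)) * p ^ X := by
      apply mul_le_mul_of_nonneg_left hJ2
      have : 1 / (8 * g) ≤ 1 := by rw [div_le_one (by linarith)]; linarith
      linarith
    have h4 : (T - 1 / (8 * g)) * p ^ X < p ^ X * T * (1 - ((2 * X : ℕ) : ℚ) / (U * (V + 1))) := by
      have : p ^ X * (T * (((2 * X : ℕ) : ℚ) / (U * (V + 1)))) < p ^ X * (1 / (8 * g)) :=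
        mul_lt_mul_of_pos_left h2 hpX
      linarith
    linarith
  · rw [div_lt_iff₀ hJpos]
    rw [hAT] at hC2
    have h2 : T * (X / p) < (1 / (8 * g)) / 2 := by
      rw [mul_div_assoc', div_div, div_lt_div_iff₀ hppos (by linarith)]
      have e1 : T * X ≤ 2 * (U * 2 ^ X) := by linarith
      have e2 : T * X * (8 * g * 2) ≤ 2 * (U * 2 ^ X) * (8 * g * 2) :=
        mul_le_mul_of_nonneg_right e1 (by linarith)
      have e3 : 2 * (U * 2 ^ X) * (8 * g * 2) < U * V := by
        have : U * (32 * 2 ^ X * g) < U * V := by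
          apply mul_lt_mul_of_pos_left _ (by linarith)
          have : 0 < 2 ^ X * g := by positivity
          linarith
        linarith
      linarith
    have h3 : T < (T + 1 / (8 * g)) * (1 - X / p) := by
      have := mul_le_mul_of_nonneg_left hXp hδ.le
      linarith
    have h4 : p ^ X * T < p ^ X * ((T + 1 / (8 * g)) * (1 - X / p)) := mul_lt_mul_of_pos_left h3 hpX
    have h5 : (T + 1 / (8 * g)) * (p ^ X * (1 - X / p)) ≤ (T + 1 / (8 * g)) * J :=
      mul_le_mul_of_nonneg_left hJp (by linarith)
    linarith

lemma binom_split (X : ℕ) (V : ℤ) (hV : 1 ≤ V) :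
    ∃ S R q : ℤ, (V + 1) ^ (2 * X) = V ^ X * S + R ∧ 0 ≤ R ∧ R * V ≤ 4 ^ X * V ^ X ∧
      S = V * q + (Nat.choose (2 * X) X : ℤ) ∧ V ^ X ≤ S := by
  refine ⟨∑ i ∈ Finset.range (X + 1), V ^ i * ((2 * X).choose (X + i) : ℤ),
    ∑ i ∈ Finset.range X, V ^ i * ((2 * X).choose i : ℤ),
    ∑ i ∈ Finset.range X, V ^ i * ((2 * X).choose (X + (i + 1)) : ℤ), ?_, ?_, ?_, ?_, ?_⟩
  · rw [add_pow, show 2 * X + 1 = X + (X + 1) by ring, Finset.sum_range_add, Finset.mul_sum, add_comm]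
    congr 1
    · apply Finset.sum_congr rfl
      intro i _; simp; ring
    · apply Finset.sum_congr rfl
      intro i _; simp
  · apply Finset.sum_nonneg; intro i _; positivity
  · have h1 : (4:ℤ) ^ X = ∑ i ∈ Finset.range (2 * X + 1), ((2 * X).choose i : ℤ) := by
      have := Nat.sum_range_choose (2 * X)
      rw [pow_mul] at this
      exact_mod_cast this.symm
    have h2 : ∑ i ∈ Finset.range X, ((2 * X).choose i : ℤ) ≤ 4 ^ X := by
      rw [h1]
      apply Finset.sum_le_sum_of_subset_of_nonneg
      · intro i; simp only [Finset.mem_range]; omega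
      · intro i _ _; positivity
    calc (∑ i ∈ Finset.range X, V ^ i * ((2 * X).choose i : ℤ)) * V
        = ∑ i ∈ Finset.range X, V ^ (i + 1) * ((2 * X).choose i : ℤ) := by
          rw [Finset.sum_mul]; apply Finset.sum_congr rfl; intro i _; ring
      _ ≤ ∑ i ∈ Finset.range X, V ^ X * ((2 * X).choose i : ℤ) := by
          apply Finset.sum_le_sum; intro i hi
          apply mul_le_mul_of_nonneg_right _ (by positivity)
          exact pow_le_pow_right₀ hV (by simpa [Nat.succ_le_iff] using hi)
      _ = V ^ X * ∑ i ∈ Finset.range X, ((2 * X).choose i : ℤ) := by rw [Finset.mul_sum]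
      _ ≤ V ^ X * 4 ^ X := mul_le_mul_of_nonneg_left h2 (by positivity)
      _ = _ := by ring
  · rw [Finset.sum_range_succ', Finset.mul_sum]
    congr 1
    · apply Finset.sum_congr rfl; intro i _; ring
    · simp
  · rw [Finset.sum_range_succ]
    have : 0 ≤ ∑ i ∈ Finset.range X, V ^ i * ((2 * X).choose (X + i) : ℤ) := by
      apply Finset.sum_nonneg; intro i _; positivity
    rw [← two_mul, Nat.choose_self]; simp; exact this

/-- combined estimate -/
lemma approx_int (X : ℕ) (hX : 3 ≤ X) (V U C J g S R : ℤ) (hg : 1 ≤ g)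
    (hV : 8 * 4 ^ X * g ≤ V) (hU1 : 1 ≤ U) (hU : X * V ^ X ≤ U * 2 ^ X)
    (hC1 : (U * (V + 1) - 1) ^ (2 * X) ≤ C) (hC2 : C ≤ (U * (V + 1)) ^ (2 * X))
    (hJ1 : (U ^ 2 * V - 1) ^ X ≤ J) (hJ2 : J ≤ (U ^ 2 * V) ^ X)
    (hS : (V + 1) ^ (2 * X) = V ^ X * S + R) (hR : 0 ≤ R) (hR2 : R * V ≤ 4 ^ X * V ^ X) :
    0 < J ∧ |(C : ℚ) / J - S| < 1 / (4 * g) := by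
  have hVpos : 0 < V := by
    have : (0:ℤ) < 8 * 4 ^ X * g := by positivity
    linarith
  have hVq : (0:ℚ) < V := by exact_mod_cast hVpos
  have hgq : (1:ℚ) ≤ g := by exact_mod_cast hg
  have hVp : (0:ℚ) < (V:ℚ) ^ X := by positivity
  have hVq8 : 8 * 4 ^ X * (g:ℚ) ≤ V := by exact_mod_cast hV
  obtain ⟨T, hT⟩ : ∃ T : ℚ, T = ((V:ℚ) + 1) ^ (2 * X) / (V:ℚ) ^ X := ⟨_, rfl⟩
  have hT' : T * (V:ℚ) ^ X = ((V:ℚ) + 1) ^ (2 * X) := by rw [hT]; field_simp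
  obtain ⟨h1, h2, h3⟩ := approx X hX V U C J g T hgq hVq8
    (by exact_mod_cast hU1) (by exact_mod_cast hU) (by exact_mod_cast hC1)
    (by exact_mod_cast hC2) (by exact_mod_cast hJ1) (by exact_mod_cast hJ2) hT'
  have hTS : (T - S) * (V:ℚ) ^ X = R := by
    have : ((V:ℚ) + 1) ^ (2 * X) = (V:ℚ) ^ X * S + R := by exact_mod_cast hS
    rw [← hT'] at this; linarith
  have hTS0 : 0 ≤ T - S := by
    have : 0 ≤ (T - S) * (V:ℚ) ^ X := by rw [hTS]; exact_mod_cast hR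
    exact nonneg_of_mul_nonneg_left this hVp
  have hTS1 : T - S ≤ 1 / (8 * g) := by
    have e : ((T - S) * V) * (V:ℚ) ^ X ≤ 4 ^ X * (V:ℚ) ^ X := by
      have : (R:ℚ) * V ≤ 4 ^ X * (V:ℚ) ^ X := by exact_mod_cast hR2
      rw [← hTS] at this; linarith
    have e2 := le_of_mul_le_mul_right e hVp
    rw [le_div_iff₀ (by linarith)]
    have h4 : (0:ℚ) < 4 ^ X := by positivity
    have e3 : (T - S) * (8 * 4 ^ X * g) ≤ (T - S) * V := mul_le_mul_of_nonneg_left hVq8 hTS0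
    have e4 : ((T - S) * (8 * g)) * 4 ^ X ≤ 1 * 4 ^ X := by linarith
    exact le_of_mul_le_mul_right e4 h4
  have e : 1 / (4 * (g:ℚ)) = 1 / (8 * g) + 1 / (8 * g) := by field_simp; norm_num
  have hδ : 0 < 1 / (8 * (g:ℚ)) := by positivity
  refine ⟨by exact_mod_cast h1, ?_⟩
  rw [abs_lt, e]
  constructor <;> linarith



lemma quot_ge (a c h b : ℤ) (N : ℕ) (hN : 2 ≤ N) (e : P a (N + 1) = c + (2 * a - 2) * h)
    (hc : c ≤ N + 1) (hb : b ≤ N) (ha : N + 2 ≤ a) : b ≤ h := by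
  have h1 := (P_bounds a (by linarith) N).1
  have h2 : (2 * a - 1) ^ 2 ≤ (2 * a - 1) ^ N := pow_le_pow_right₀ (by linarith) hN
  have hN' : (2:ℤ) ≤ N := by exact_mod_cast hN
  have h3 : (2 * a - 2) * b ≤ (2 * a - 2) * h := by
    have h4 : (2 * a - 2) * b ≤ (2 * a - 2) * N := mul_le_mul_of_nonneg_left hb (by linarith)
    nlinarith
  exact le_of_mul_le_mul_left h3 (by linarith)

set_option maxHeartbeats 1000000 in
lemma one_to_two (b X Y g : ℤ) (hb0 : 0 ≤ b) (hbX : b ≤ X) (hY : max b (2 ^ 8) ≤ Y) (hg : 1 ≤ g)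
    (h : Cond1 b X Y) : Cond2 b X Y g := by
  obtain ⟨⟨t, ht⟩, hdvd⟩ := h
  have hYb : b ≤ Y := le_trans (le_max_left _ _) hY
  have hY8 : 256 ≤ Y := le_trans (by norm_num) (le_trans (le_max_right _ _) hY)
  obtain ⟨n, rfl⟩ := Int.eq_ofNat_of_zero_le (hb0.trans hbX)
  rw [Int.toNat_natCast] at hdvd
  have hb1 : 1 ≤ b := by rw [ht]; exact one_le_pow₀ (by norm_num)
  have hn4 : 4 ≤ n := by
    by_contra hcon
    have hpos : 0 < Nat.choose (2 * n) n := Nat.choose_pos (by omega)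
    have h1 := Int.le_of_dvd (by exact_mod_cast hpos) hdvd
    have h2 : Nat.choose (2 * n) n ≤ 2 ^ (2 * n) := Nat.choose_le_two_pow _ _
    have h3 : 2 ^ (2 * n) ≤ 2 ^ 6 := Nat.pow_le_pow_right (by norm_num) (by omega)
    have : (Nat.choose (2 * n) n : ℤ) ≤ 64 := by exact_mod_cast h2.trans h3
    linarith
  have htn : t < n := by
    have h1 : 2 ^ t ≤ n := by
      rw [ht] at hbX; exact_mod_cast hbX
    exact lt_of_lt_of_le Nat.lt_two_pow_self h1
  obtain ⟨w, hw⟩ : ∃ w : ℤ, w = 2 ^ (2 * n + 1 - t) := ⟨_, rfl⟩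
  have hbw : b * w = 2 ^ (2 * n + 1) := by
    rw [ht, hw, ← pow_add]; congr 1; omega
  have hwb : b ≤ w := by
    rw [ht, hw]; exact pow_le_pow_right₀ (by norm_num) (by omega)
  have hw1 : 1 ≤ w := hb1.trans hwb
  obtain ⟨v, hv⟩ : ∃ v : ℤ, v = 4 * g * w * Y := ⟨_, rfl⟩
  have hgw : 1 ≤ g * w := by nlinarith
  have hv8 : 8 * 4 ^ n * g ≤ v := by
    have e : (8 * 4 ^ n * g : ℤ) = 4 * g * (b * w) := by
      rw [hbw, pow_succ, pow_mul]; norm_num; ring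
    rw [e, hv]
    have : g * w * b ≤ g * w * Y := mul_le_mul_of_nonneg_left hYb (by linarith)
    linarith
  have hvbY : b * Y ≤ v := by
    rw [hv]
    have : b ≤ 4 * g * w := by nlinarith
    exact mul_le_mul_of_nonneg_right this (by linarith)
  have hv1 : 1 ≤ v := by nlinarith
  obtain ⟨S, R, q, hS, hR0, hR, hSq, hSv⟩ := binom_split n v hv1
  obtain ⟨l, hl⟩ : Y ∣ S := by
    rw [hSq]
    exact dvd_add (Dvd.dvd.mul_right ⟨4 * g * w, by rw [hv]; ring⟩ _) hdvd
  have hvn : v ≤ v ^ n := le_self_pow₀ hv1 (by omega)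
  have hlb : b ≤ l := by
    have : Y * b ≤ Y * l := by rw [← hl]; linarith
    exact le_of_mul_le_mul_left this (by linarith)
  have hS1 : 256 ≤ S := by nlinarith
  have hnz : (4:ℤ) ≤ n := by exact_mod_cast hn4
  have hU : U n Y l = 2 * n * S := by unfold U; rw [hl]; ring
  have hVv : V Y g w = v := by unfold V; rw [hv]
  obtain ⟨a, ha⟩ : ∃ a : ℤ, a = n * S * (v + 1) := ⟨_, rfl⟩
  have hA : A n Y g l w = 2 * a := by unfold A; rw [hU, hVv, ha]; ring
  have hnS : 256 * (n:ℤ) ≤ n * S := by nlinarith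
  have haS : n * S ≤ a := by rw [ha]; nlinarith
  obtain ⟨p, hp⟩ : ∃ p : ℤ, p = 2 * (n * S) ^ 2 * v := ⟨_, rfl⟩
  have hpS : n * S ≤ p := by
    have h1 : n * S ≤ (n * S) ^ 2 := by nlinarith
    rw [hp]; nlinarith
  have hUV : U n Y l ^ 2 * V Y g w = 2 * p := by rw [hU, hVv, hp]; ring
  obtain ⟨h, hh⟩ := P_sub_two a (2 * n + 1)
  obtain ⟨k, hk⟩ := P_sub_two p (n + 1)
  have hC : C n Y g h l w = P a (2 * n + 1) := by
    unfold C B; rw [hA]; push_cast at hh; linear_combination -hh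
  have hJ : J n Y g k l w = P p (n + 1) := by
    unfold J; rw [hUV]; push_cast at hk; linear_combination -hk
  have hhb : b ≤ h := by
    refine quot_ge a (2 * n + 1) h b (2 * n) (by omega) ?_ (by push_cast; linarith)
      (by push_cast; linarith) (by push_cast; linarith)
    push_cast at hh; linear_combination hh
  have hkb : b ≤ k := by
    refine quot_ge p (n + 1) k b n (by omega) ?_ le_rfl hbX (by linarith)
    push_cast at hk; linear_combination hk
  obtain ⟨x, y, m, hx, hy, hR1⟩ := R1_bwd a (by linarith) n (by omega) b
    (P a (2 * n + 1)) hb0 rfl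
  refine ⟨h, k, l, w, x, y, hhb, hkb, hlb, hwb, hx, hy, ⟨m, ?_⟩, ?_, ?_, ?_⟩
  · apply hR1 (D n Y g h l w) (E n Y g h l w x) (F n Y g h l w x) (G n Y g h l w x)
      (H n Y g h l w x y) (I n Y g h l w x y)
    · unfold D; rw [hA, hC]
    · unfold E; rw [hC]
    · unfold F; rw [hA]
    · unfold G; rw [hA, hC]
    · unfold H B; rw [hC]
    · unfold I; rfl
  · obtain ⟨z, hz⟩ := P_pell p (n + 1)
    refine ⟨2 * z, ?_⟩
    have e : U n Y l ^ 4 * V Y g w ^ 2 = (2 * p) ^ 2 := by rw [← hUV]; ring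
    rw [e, hJ]
    linear_combination 4 * hz
  · unfold R3
    rw [hA, hC, mul_assoc 3 b w, ← mul_pow, hbw]
    have h1 := P_exp a (2 * n + 1)
    have e : ((2:ℤ) ^ (2 * n + 1)) ^ 2 = 4 ^ (2 * n + 1) := by
      rw [← pow_mul, mul_comm (2 * n + 1) 2, pow_mul 2 2]; norm_num
    rw [e]; exact h1
  · have bC := P_bounds a (by linarith) (2 * n)
    have bJ := P_bounds p (by linarith) n
    have e1 : 2 * a = 2 * n * S * (v + 1) := by rw [ha]; ring
    have e2 : 2 * p = (2 * n * S) ^ 2 * v := by rw [hp]; ring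
    rw [e1] at bC
    rw [e2] at bJ
    have h2n : (1:ℤ) ≤ 2 ^ n := one_le_pow₀ (by norm_num)
    have hUb : (n:ℤ) * v ^ n ≤ 2 * n * S * 2 ^ n := by
      have i1 : (n:ℤ) * v ^ n ≤ n * S := mul_le_mul_of_nonneg_left hSv (by linarith)
      have i2 : 2 * n * S * 1 ≤ 2 * n * S * 2 ^ n := mul_le_mul_of_nonneg_left h2n (by linarith)
      linarith
    obtain ⟨hJpos, hfin⟩ := approx_int n (by omega) v (2 * n * S) (P a (2 * n + 1)) (P p (n + 1)) g S R
      hg hv8 (by linarith) hUb bC.1 bC.2 bJ.1 bJ.2 hS hR0 hR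
    refine ⟨by rw [hJ]; exact hJpos.ne', ?_⟩
    rw [hJ, hC]
    have e3 : (l : ℚ) * Y = S := by rw [hl]; push_cast; ring
    have e4 : 1 / (16 * (g:ℚ) ^ 2) = (1 / (4 * (g:ℚ))) ^ 2 := by
      rw [div_pow, mul_pow]; norm_num
    rw [e3, e4, sq_lt_sq, abs_of_pos (a := 1 / (4 * (g:ℚ)))]
    · exact hfin
    · have : (1:ℚ) ≤ g := by exact_mod_cast hg
      positivity


lemma sign_fix (a c : ℤ) (N : ℕ) (hN : 0 < N) (h : |c| = |P a N|) (hd : a - 1 ∣ c - N)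
    (hbig : 2 * (N : ℤ) < |a - 1|) : c = P a N := by
  rcases abs_eq_abs.1 h with h | h
  · exact h
  · exfalso
    have h1 := P_sub a N
    have h2 : a - 1 ∣ 2 * (N : ℤ) := by
      have e : 2 * (N : ℤ) = -(c - N) - (P a N - N) := by rw [h]; ring
      rw [e]; exact dvd_sub (dvd_neg.2 hd) h1
    have h3 := Int.eq_zero_of_abs_lt_dvd ((abs_dvd _ _).2 h2)
      (by rw [abs_of_nonneg (by positivity)]; exact hbig)
    omega

lemma index_cases (p c : ℤ) (n j : ℕ) (h : |c| = |P p j|) (hd : p - 1 ∣ c - (n + 1))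
    (hbig : 4 * (n : ℤ) + 10 ≤ |p - 1|) : j = n + 1 ∨ 2 * n + 2 ≤ j := by
  rcases dvd_abs_choice h (P_sub p j) with h1 | h1
  · have h2 : |p - 1| ∣ (j : ℤ) - (n + 1) := by
      rw [abs_dvd]
      have e : (j : ℤ) - (n + 1) = (c - (n + 1)) - (c - j) := by ring
      rw [e]; exact dvd_sub hd h1
    by_contra hcon
    push Not at hcon
    have := Int.eq_zero_of_abs_lt_dvd h2 (by rw [abs_lt]; constructor <;> omega)
    omega
  · have h2 : |p - 1| ∣ (j : ℤ) + (n + 1) := by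
      rw [abs_dvd]
      have e : (j : ℤ) + (n + 1) = (c + j) - (c - (n + 1)) := by ring
      rw [e]; exact dvd_sub h1 hd
    have := Int.le_of_dvd (by omega) h2
    right; omega

lemma crude (n : ℕ) (u v L c j : ℤ) (hv : 1024 ≤ v) (hu : 512 ≤ u) (huL : u = 2 * n * L)
    (hc : (u * (v - 1) - 1) ^ (2 * n) ≤ c) (hj : j ≤ (u ^ 2 * v) ^ n) (hj0 : 0 < j)
    (hcj : 2 * c ≤ (2 * L + 1) * j) : n * v ^ n ≤ u * 2 ^ n := by
  have huv : 4 * u + 4 ≤ u * v := by nlinarith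
  have h1 : u ^ 2 * v * v ≤ 2 * (u * (v - 1) - 1) ^ 2 := by nlinarith
  have h2 : (u ^ 2 * v * v) ^ n ≤ (2 * (u * (v - 1) - 1) ^ 2) ^ n :=
    pow_le_pow_left₀ (by positivity) h1 n
  rw [mul_pow (u ^ 2 * v), mul_pow 2, ← pow_mul] at h2
  have hvn : 0 ≤ v ^ n := by positivity
  have h2n : (0:ℤ) < 2 ^ n := by positivity
  have h3 : j * v ^ n ≤ 2 ^ n * c := by
    calc j * v ^ n ≤ (u ^ 2 * v) ^ n * v ^ n := mul_le_mul_of_nonneg_right hj hvn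
      _ ≤ _ := h2
      _ ≤ _ := mul_le_mul_of_nonneg_left hc h2n.le
  have h4 : j * (2 * v ^ n) ≤ j * (2 ^ n * (2 * L + 1)) := by
    have : 2 ^ n * (2 * c) ≤ 2 ^ n * ((2 * L + 1) * j) := mul_le_mul_of_nonneg_left hcj h2n.le
    linarith
  have h5 := le_of_mul_le_mul_left h4 hj0
  have h6 : (2:ℤ) ^ n ≤ v ^ n := pow_le_pow_left₀ (by norm_num) (by linarith) n
  have h7 : v ^ n ≤ 2 * L * 2 ^ n := by linarith
  have h8 : (n:ℤ) * v ^ n ≤ n * (2 * L * 2 ^ n) := mul_le_mul_of_nonneg_left h7 (by positivity)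
  rw [huL]; linarith

lemma exp_size (n : ℕ) (hn : 3 ≤ n) (u v q M : ℤ) (hv : 1024 ≤ v) (hu : 512 ≤ u)
    (hq : q ≠ 0) (hvq : 4 * |q| ≤ v) (hcr : n * v ^ n ≤ u * 2 ^ n) (hM : u * v ≤ |M|)
    (hd : M ∣ 2 * ((2 ^ (2 * n + 1) - q) * (2 ^ (2 * n + 1) * q + 1))) :
    q = 2 ^ (2 * n + 1) := by
  obtain ⟨k, rfl⟩ : ∃ k, n = k + 1 := ⟨n - 1, by omega⟩
  obtain ⟨Q, hQ⟩ : ∃ Q, Q = |q| := ⟨_, rfl⟩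
  have hQ1 : 1 ≤ Q := by rw [hQ]; exact Int.one_le_abs hq
  rw [← hQ] at hvq
  obtain ⟨T, hT⟩ : ∃ T : ℤ, T = 2 ^ (2 * (k + 1) + 1) := ⟨_, rfl⟩
  rw [← hT] at hd ⊢
  have hT1 : 8 ≤ T := by
    rw [hT]
    calc (8:ℤ) = 2 ^ 3 := by norm_num
      _ ≤ _ := pow_le_pow_right₀ (by norm_num) (by omega)
  obtain ⟨z, hz⟩ : ∃ z : ℤ, z = 32 ^ k := ⟨_, rfl⟩
  have hz1 : 1024 ≤ z := by
    rw [hz]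
    calc (1024:ℤ) = 32 ^ 2 := by norm_num
      _ ≤ _ := pow_le_pow_right₀ (by norm_num) (by omega)
  have hTT : T ^ 2 * 2 ^ (k + 1) = 128 * z := by
    rw [hT, hz, ← pow_mul, ← pow_add, show (32:ℤ) = 2 ^ 5 by norm_num, ← pow_mul,
      show (128:ℤ) = 2 ^ 7 by norm_num, ← pow_add]
    congr 1; ring
  have hvv : 16 * Q ^ 2 * (z * z) ≤ v ^ (k + 1) * v := by
    have e : v ^ (k + 1) * v = v ^ 2 * v ^ k := by ring
    rw [e]
    have h1 : 16 * Q ^ 2 ≤ v ^ 2 := by nlinarith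
    have h2 : z * z ≤ v ^ k := by
      rw [hz, ← mul_pow]; exact pow_le_pow_left₀ (by norm_num) (by linarith) k
    exact mul_le_mul h1 h2 (by positivity) (by positivity)
  have hQ2 : 1 ≤ Q ^ 2 := by nlinarith
  have h2n : (0:ℤ) < 2 ^ (k + 1) := by positivity
  have key : 8 * T ^ 2 * Q ^ 2 < u * v := by
    have h3 : 2 ^ (k + 1) * (8 * T ^ 2 * Q ^ 2) < 2 ^ (k + 1) * (u * v) := by
      have h4 : (v ^ (k + 1)) * v ≤ u * 2 ^ (k + 1) * v := by
        apply mul_le_mul_of_nonneg_right _ (by linarith)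
        refine le_trans ?_ hcr
        have : (1:ℤ) ≤ (k + 1 : ℕ) := by push_cast; linarith
        exact le_mul_of_one_le_left (by positivity) this
      have h5 : 2 ^ (k + 1) * (8 * T ^ 2 * Q ^ 2) = Q ^ 2 * (1024 * z) := by
        calc (2:ℤ) ^ (k + 1) * (8 * T ^ 2 * Q ^ 2) = 8 * (T ^ 2 * 2 ^ (k + 1)) * Q ^ 2 := by ring
          _ = _ := by rw [hTT]; ring
      have h6 : Q ^ 2 * (1024 * z) < Q ^ 2 * (16 * (z * z)) := by
        apply mul_lt_mul_of_pos_left _ (by linarith)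
        nlinarith
      rw [h5]; linarith
    exact lt_of_mul_lt_mul_left h3 h2n.le
  have hsmall : |2 * ((T - q) * (T * q + 1))| ≤ 8 * T ^ 2 * Q ^ 2 := by
    rw [abs_mul, abs_mul]
    have h1 : |T - q| ≤ 2 * (T * Q) := by
      have : |T - q| ≤ |T| + |q| := abs_sub _ _
      rw [abs_of_nonneg (by linarith : 0 ≤ T), ← hQ] at this
      nlinarith
    have h2 : |T * q + 1| ≤ 2 * (T * Q) := by
      have : |T * q + 1| ≤ |T * q| + |1| := abs_add_le _ _
      rw [abs_mul, abs_of_nonneg (by linarith : 0 ≤ T), ← hQ, abs_one] at this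
      nlinarith
    have h3 : |T - q| * |T * q + 1| ≤ 2 * (T * Q) * (2 * (T * Q)) :=
      mul_le_mul h1 h2 (abs_nonneg _) (by positivity)
    have : |(2:ℤ)| = 2 := by norm_num
    rw [this]
    linarith
  have h0 := Int.eq_zero_of_abs_lt_dvd ((abs_dvd _ _).2 hd) (by linarith)
  rcases mul_eq_zero.1 h0 with h | h
  · norm_num at h
  · rcases mul_eq_zero.1 h with h | h
    · linarith
    · exfalso
      have h1 : T ∣ 1 := ⟨-q, by linarith⟩
      have := Int.le_of_dvd (by norm_num) h1
      linarith



set_option maxHeartbeats 2000000 in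
lemma zero_to_one (b X Y g : ℤ) (hb0 : 0 ≤ b) (hbX : 3 * b ≤ X) (hY : max b (2 ^ 8) ≤ Y)
    (hg : 1 ≤ g) (h : Cond0a b X Y g) : Cond1 b X Y := by
  obtain ⟨h, k, l, w, x, y, hlx, ⟨m, hm⟩, ⟨m2, hm2⟩, hR3, hJ0, hR5⟩ := h
  have hYb : b ≤ Y := le_trans (le_max_left _ _) hY
  have hY8 : 256 ≤ Y := le_trans (by norm_num) (le_trans (le_max_right _ _) hY)
  obtain ⟨n, rfl⟩ := Int.eq_ofNat_of_zero_le (by linarith : 0 ≤ X)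
  have hl0 : l ≠ 0 := left_ne_zero_of_mul hlx
  have hx0 : x ≠ 0 := right_ne_zero_of_mul hlx
  obtain ⟨v', hv'⟩ : ∃ v' : ℤ, v' = V Y g w := ⟨_, rfl⟩
  obtain ⟨a, ha⟩ : ∃ a : ℤ, a = l * n * Y * (v' + 1) := ⟨_, rfl⟩
  obtain ⟨p, hp⟩ : ∃ p : ℤ, p = 2 * (l * n * Y) ^ 2 * v' := ⟨_, rfl⟩
  have hv'' : v' = 4 * g * w * Y := by rw [hv']; rfl
  have hA : A n Y g l w = 2 * a := by unfold A U; rw [← hv', ha]; ring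
  have hUV : U n Y l ^ 2 * V Y g w = 2 * p := by unfold U; rw [← hv', hp]; ring
  obtain ⟨L, hL⟩ : ∃ L : ℤ, L = |l| * Y := ⟨_, rfl⟩
  have hl1 : 1 ≤ |l| := Int.one_le_abs hl0
  have hL8 : 256 ≤ L := by rw [hL]; nlinarith
  have hLY : |l * Y| = L := by rw [abs_mul, hL, abs_of_nonneg (by linarith : 0 ≤ Y)]
  obtain ⟨u, hu⟩ : ∃ u : ℤ, u = 2 * n * L := ⟨_, rfl⟩
  have hau : 2 * |a| = u * |v' + 1| := by
    rw [ha, abs_mul, mul_right_comm l, abs_mul (l * Y), hLY, hu, Nat.abs_cast]; ring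
  have hv1 : v' + 1 ≠ 0 := by
    have : v' = 4 * (g * w * Y) := by rw [hv'']; ring
    omega
  unfold R3 at hR3
  rw [hA] at hR3
  -- exclude `b w = 0`
  have hbw : b * w ≠ 0 := by
    intro h0
    have e : 3 * b * w * C n Y g h l w - 2 * (b ^ 2 * w ^ 2 - 1) = 2 := by
      linear_combination (3 * C n Y g h l w - 2 * (b * w)) * h0
    rw [e] at hR3
    rcases Nat.eq_zero_or_pos n with hn | hn
    · have : a = 0 := by rw [ha, hn]; simp
      rw [this] at hR3; norm_num at hR3
    · have hn' : (1:ℤ) ≤ n := by exact_mod_cast hn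
      have h1 := Int.one_le_abs hv1
      have h2 : 512 ≤ u := by rw [hu]; nlinarith
      have h3 : 512 ≤ 2 * |a| := by rw [hau]; nlinarith
      have h4 := Int.le_of_dvd (by norm_num) hR3
      have h5 := Int.le_of_dvd (by norm_num) ((neg_dvd).2 hR3)
      rcases abs_choice a with e | e <;> rw [e] at h3 <;> linarith
  have hb1 : 1 ≤ b := by
    have : b ≠ 0 := left_ne_zero_of_mul hbw
    omega
  have hw0 : w ≠ 0 := right_ne_zero_of_mul hbw
  have hn3 : 3 ≤ n := by omega
  have hnz : (3:ℤ) ≤ n := by exact_mod_cast hn3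
  obtain ⟨v, hv⟩ : ∃ v : ℤ, v = |v'| := ⟨_, rfl⟩
  have hvw : v = 4 * g * |w| * Y := by
    rw [hv, hv'', abs_mul, abs_mul, abs_of_nonneg (by linarith : 0 ≤ Y),
      abs_of_nonneg (by linarith : 0 ≤ 4 * g)]
  have hw1 : 1 ≤ |w| := Int.one_le_abs hw0
  have hgw : |w| ≤ g * |w| := le_mul_of_one_le_left (abs_nonneg _) hg
  have hv4 : 4 * (|w| * Y) ≤ v := by
    rw [hvw]
    have : |w| * Y ≤ g * |w| * Y := mul_le_mul_of_nonneg_right hgw (by linarith)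
    linarith
  have hv1024 : 1024 ≤ v := by nlinarith
  have hvq : 4 * |b * w| ≤ v := by
    rw [abs_mul, abs_of_nonneg hb0]
    have : b * |w| ≤ Y * |w| := mul_le_mul_of_nonneg_right hYb (abs_nonneg _)
    linarith
  have hun : 512 * (n:ℤ) ≤ u := by rw [hu]; nlinarith
  have hu512 : 512 ≤ u := by linarith
  have hvp1 : v - 1 ≤ |v' + 1| ∧ |v' + 1| ≤ v + 1 := by
    rw [hv]
    rcases abs_cases v' with ⟨e1, e2⟩ | ⟨e1, e2⟩ <;> rcases abs_cases (v' + 1) with ⟨e3, e4⟩ | ⟨e3, e4⟩ <;>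
      rw [e1, e3] <;> constructor <;> linarith
  have hpu : 2 * |p| = u ^ 2 * v := by
    rw [hp, abs_mul, abs_mul, abs_pow, mul_right_comm l, abs_mul (l * Y), hLY, hu, Nat.abs_cast, ← hv]
    norm_num; ring
  have ha_lo : u * (v - 1) ≤ 2 * |a| := by
    rw [hau]; exact mul_le_mul_of_nonneg_left hvp1.1 (by linarith)
  have ha_hi : 2 * |a| ≤ u * (v + 1) := by
    rw [hau]; exact mul_le_mul_of_nonneg_left hvp1.2 (by linarith)
  have huv : 1024 * u ≤ u * v := by nlinarith
  have hpbig : 512 * (u * v) ≤ 2 * |p| := by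
    rw [hpu]
    have : 0 ≤ (u - 512) * (u * v) := mul_nonneg (by linarith) (by linarith)
    linarith
  have ha2 : 2 ≤ |a| := by linarith
  have hp2 : 1 < p.natAbs := by
    have : 2 ≤ |p| := by linarith
    rw [Int.abs_eq_natAbs] at this; omega
  have hp1 : 4 * (n:ℤ) + 10 ≤ |p - 1| := by
    have : |p| ≤ |p - 1| + |1| := by
      have := abs_add_le (p - 1) 1; rwa [sub_add_cancel] at this
    rw [abs_one] at this
    linarith
  have ham1 : 2 * ((2 * n + 1 : ℕ):ℤ) < |a - 1| := by
    have : |a| ≤ |a - 1| + |1| := by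
      have := abs_add_le (a - 1) 1; rwa [sub_add_cancel] at this
    rw [abs_one] at this
    push_cast
    linarith
  -- R5
  obtain ⟨c, hc⟩ : ∃ c, c = C n Y g h l w := ⟨_, rfl⟩
  obtain ⟨jj, hjj⟩ : ∃ j, j = J n Y g k l w := ⟨_, rfl⟩
  rw [← hjj] at hJ0 hR5
  rw [← hc] at hR5 hR3
  have hR5a : |(c:ℚ) / jj - l * Y| < 1 / 2 := by
    have e : (1:ℚ) / 4 = (1 / 2) ^ 2 := by norm_num
    rw [e, sq_lt_sq, abs_of_pos (a := (1:ℚ) / 2) (by norm_num)] at hR5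
    exact hR5
  have hjjpos : 0 < |jj| := abs_pos.2 hJ0
  have hR5b : 2 * |c - l * Y * jj| < |jj| := by
    have hq : (jj : ℚ) ≠ 0 := by exact_mod_cast hJ0
    have e : (c:ℚ) / jj - l * Y = (c - l * Y * jj) / jj := by field_simp
    rw [e, abs_div, div_lt_iff₀ (abs_pos.2 hq)] at hR5a
    have : 2 * |(c:ℚ) - l * Y * jj| < |(jj:ℚ)| := by linarith
    exact_mod_cast this
  have hLj : |l * Y * jj| = L * |jj| := by rw [abs_mul, hLY]
  have hc_lo : 2 * L * |jj| - |jj| < 2 * |c| := by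
    have : |l * Y * jj| ≤ |c - l * Y * jj| + |c| := by
      have := abs_sub_abs_le_abs_sub (l * Y * jj) c
      rw [abs_sub_comm] at this; linarith
    rw [hLj] at this; linarith
  have hc_hi : 2 * |c| ≤ (2 * L + 1) * |jj| := by
    have : |c| ≤ |c - l * Y * jj| + |l * Y * jj| := by
      have := abs_add_le (c - l * Y * jj) (l * Y * jj); rwa [sub_add_cancel] at this
    rw [hLj] at this; linarith
  have hcj : |jj| < |c| := by nlinarith
  -- R2
  have hJp : jj = (n + 1) + k * (2 * p - 2) := by rw [hjj]; unfold J; rw [hUV]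
  have hCa : c = (2 * n + 1) + (2 * a - 2) * h := by rw [hc]; unfold C B; rw [hA]
  have hJd : p - 1 ∣ jj - (n + 1) := ⟨2 * k, by rw [hJp]; ring⟩
  obtain ⟨j, hj⟩ := pell_sol4 p hp2 jj m2 (by
    rw [← hm2, ← hUV, hjj]; ring)
  rw [← abs_P_eq_yn] at hj
  have hjcases := index_cases p jj n j hj hJd hp1
  have hpP := abs_P_bounds p (by linarith)
  have haP := abs_P_bounds a (by linarith)
  have hj1 : ∃ i, j = i + 1 ∧ 1 ≤ i := ⟨j - 1, by omega, by omega⟩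
  obtain ⟨i, hi, hi1⟩ := hj1
  have hp21 : 1 ≤ 2 * |p| - 1 := by linarith
  have hJlo : (2 * |p| - 1) ^ i ≤ |jj| := by rw [hj, hi]; exact (hpP i).1
  have hJlo1 : 2 * |p| - 1 ≤ |jj| := le_trans (le_self_pow₀ hp21 (by omega)) hJlo
  have hcB : ((2 * n + 1 : ℕ) : ℤ) ≤ |c| := by push_cast; linarith
  have hCabs : |c| = |P a (2 * n + 1)| := by
    refine R1_fwd a c (D n Y g h l w) (E n Y g h l w x) (F n Y g h l w x) (G n Y g h l w x)
      (H n Y g h l w x y) (I n Y g h l w x y) x y m (2 * n + 1) ?_ ?_ ?_ ?_ ?_ ?_ hm hx0 ha2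
      (by omega) hcB
    · unfold D; rw [hA, ← hc]
    · unfold E; rw [← hc]
    · unfold F; rw [hA]
    · unfold G; rw [hA, ← hc]
    · unfold H B; rw [← hc]; push_cast; ring
    · unfold I; rfl
  have hCeq : c = P a (2 * n + 1) := by
    refine sign_fix a c (2 * n + 1) (by omega) hCabs ⟨2 * h, ?_⟩ ham1
    rw [hCa]; push_cast; ring
  have hjn : j = n + 1 := by
    rcases hjcases with h1 | h1
    · exact h1
    · exfalso
      have h2 := (haP (2 * n)).2
      rw [← hCabs] at h2
      have h3 : (2 * |a|) ^ (2 * n) ≤ (2 * |p| - 1) ^ (2 * n) :=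
        pow_le_pow_left₀ (by positivity) (by linarith) _
      have h4 : (2 * |p| - 1) ^ (2 * n) ≤ (2 * |p| - 1) ^ i := pow_le_pow_right₀ hp21 (by omega)
      linarith
  rw [hjn] at hj
  have hJb := hpP n
  have hCb := haP (2 * n)
  rw [← hj, hpu] at hJb
  rw [← hCabs] at hCb
  have hcr : n * v ^ n ≤ u * 2 ^ n := by
    refine crude n u v L |c| |jj| hv1024 hu512 hu ?_ hJb.2 hjjpos hc_hi
    refine le_trans ?_ hCb.1
    apply pow_le_pow_left₀ (by linarith)
    linarith
  -- exponential
  have hq : b * w = 2 ^ (2 * n + 1) := by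
    refine exp_size n hn3 u v (b * w) (2 * (2 * a) - 5) hv1024 hu512 hbw hvq hcr ?_ ?_
    · have h1 : 2 * (2 * |a|) - 5 ≤ |2 * (2 * a) - 5| := by
        rcases abs_cases a with ⟨e1, _⟩ | ⟨e1, _⟩ <;>
        rcases abs_cases (2 * (2 * a) - 5) with ⟨e2, _⟩ | ⟨e2, _⟩ <;> rw [e1, e2] <;> linarith
      linarith
    · apply exp_dvd
      rw [← hCeq]
      have e : 3 * (b * w) * c - 2 * ((b * w) ^ 2 - 1) = 3 * b * w * c - 2 * (b ^ 2 * w ^ 2 - 1) := by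
        ring
      rw [e]; exact hR3
  have hwpos : 0 < w := by
    have : 0 < b * w := by rw [hq]; positivity
    exact pos_of_mul_pos_right this hb0
  have hgwY : 0 < 4 * g * w * Y := by
    have : 0 < g * w := mul_pos (by linarith) hwpos
    have := mul_pos this (by linarith : 0 < Y)
    linarith
  have hvv' : v = v' := by rw [hv, abs_of_pos]; rw [hv'']; exact hgwY
  refine ⟨?_, ?_⟩
  · have hd : b.natAbs ∣ 2 ^ (2 * n + 1) := by
      have : b ∣ 2 ^ (2 * n + 1) := ⟨w, hq.symm⟩
      have := Int.natAbs_dvd_natAbs.2 this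
      rwa [Int.natAbs_pow] at this
    obtain ⟨t, -, ht⟩ := (Nat.dvd_prime_pow Nat.prime_two).1 hd
    refine ⟨t, ?_⟩
    have : (b.natAbs : ℤ) = b := Int.natAbs_of_nonneg hb0
    rw [← this, ht]; push_cast; rfl
  · rw [Int.toNat_natCast]
    have hppos : 0 < p := by
      rw [hp, ← hvv']
      have : l * n * Y ≠ 0 := mul_ne_zero (mul_ne_zero hl0 (by linarith)) (by linarith)
      have : 0 < (l * n * Y) ^ 2 := by positivity
      have := mul_pos this (by linarith : 0 < v)
      linarith
    have hJeq : jj = P p (n + 1) := by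
      refine sign_fix p jj (n + 1) (by omega) hj ?_ (by push_cast; linarith)
      push_cast; exact hJd
    have hJpos : 0 ≤ jj := by
      rw [hJeq]
      refine le_trans ?_ (P_bounds p (by linarith) n).1
      apply pow_nonneg; linarith
    have hCpos : 0 ≤ c := by
      have h1 : c = P |a| (2 * n + 1) := by
        rcases abs_choice a with e | e <;> rw [e, hCeq]
        rw [P_neg_odd]
      rw [h1]
      refine le_trans ?_ (P_bounds |a| (by linarith) (2 * n)).1
      apply pow_nonneg; linarith
    rw [abs_of_nonneg hJpos] at hJb
    rw [abs_of_nonneg hCpos] at hCb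
    have hau' : 2 * |a| = u * (v + 1) := by
      rw [hau, ← hvv', abs_of_nonneg (by linarith)]
    rw [hau'] at hCb
    obtain ⟨S, R, q, hS, hR0, hR, hSq, hSv⟩ := binom_split n v (by linarith)
    have hv8 : 8 * 4 ^ n * 1 ≤ v := by
      have e : (8 * 4 ^ n * 1 : ℤ) = 4 * (b * w) := by
        rw [hq, pow_succ, pow_mul]; norm_num; ring
      rw [e]; exact le_trans (by linarith [le_abs_self (b * w)]) hvq
    obtain ⟨-, hfin⟩ := approx_int n hn3 v u c jj 1 S R le_rfl hv8 (by linarith) hcr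
      hCb.1 hCb.2 hJb.1 hJb.2 hS hR0 hR
    have hSl : S = l * Y := by
      have h1 : |((S - l * Y : ℤ) : ℚ)| < 1 := by
        push_cast at hfin ⊢
        rw [abs_lt] at hfin hR5a ⊢
        constructor <;> linarith [hfin.1, hfin.2, hR5a.1, hR5a.2]
      have h2 : |S - l * Y| < 1 := by exact_mod_cast h1
      have := Int.abs_lt_one_iff.1 h2
      linarith
    have e : (Nat.choose (2 * n) n : ℤ) = Y * (l - 4 * g * w * q) := by
      have : (Nat.choose (2 * n) n : ℤ) = S - v * q := by linarith
      rw [this, hSl, hvv', hv'']; ring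
    exact ⟨_, e⟩

lemma two_to_zero (b X Y g : ℤ) (hb0 : 0 ≤ b) (hbX : 3 * b ≤ X) (hY : max b (2 ^ 8) ≤ Y)
    (hg : 1 ≤ g) (h : Cond2 b X Y g) : Cond0a b X Y g := by
  obtain ⟨h, k, l, w, x, y, hh, hk, hl, hw, hx, hy, hR1, hR2, hR3, hJ, hR4⟩ := h
  have hY8 : 256 ≤ Y := le_trans (by norm_num) (le_trans (le_max_right _ _) hY)
  have hb : b ≠ 0 := by
    rintro rfl
    unfold R3 at hR3
    have e : 3 * 0 * w * C X Y g h l w - 2 * (0 ^ 2 * w ^ 2 - 1) = 2 := by ring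
    rw [e] at hR3
    have hA : A X Y g l w = 2 * (l * X * Y * (V Y g w + 1)) := by unfold A U; ring
    have hA0 : 0 ≤ l * X * Y * (V Y g w + 1) := by
      have : 0 ≤ V Y g w := by unfold V; positivity
      positivity
    rw [hA] at hR3
    set z := l * X * Y * (V Y g w + 1) with hz
    have hY' : Y ∣ z := ⟨l * X * (V Y g w + 1), by rw [hz]; ring⟩
    rcases hA0.eq_or_lt with h0 | h0
    · rw [← h0] at hR3; norm_num at hR3
    · have h1 := Int.le_of_dvd h0 hY'
      have h2 := Int.le_of_dvd (by norm_num) hR3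
      linarith
  refine ⟨h, k, l, w, x, y, mul_ne_zero (by omega) (by omega), hR1, hR2, hR3, hJ, ?_⟩
  refine lt_of_lt_of_le hR4 ?_
  have hgq : (1:ℚ) ≤ g := by exact_mod_cast hg
  apply one_div_le_one_div_of_le (by norm_num)
  nlinarith


/-- **Bridge Theorem.** For integers `b ≥ 0`, `X ≥ 3b`, `Y ≥ max{b, 2⁸}` and
`g ≥ 1`, conditions (1), (2) and (0a) are equivalent.  Moreover,
(1) ⟹ (2) already holds under the weaker hypothesis `X ≥ b`. -/
theorem bridge_theorem :
    (∀ b X Y g : ℤ, 0 ≤ b → 3 * b ≤ X → max b (2 ^ 8) ≤ Y → 1 ≤ g →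
      (Cond1 b X Y ↔ Cond2 b X Y g) ∧ (Cond1 b X Y ↔ Cond0a b X Y g)) ∧
    (∀ b X Y g : ℤ, 0 ≤ b → b ≤ X → max b (2 ^ 8) ≤ Y → 1 ≤ g →
      Cond1 b X Y → Cond2 b X Y g) := by
  refine ⟨fun b X Y g hb hX hY hg => ?_,
    fun b X Y g hb hX hY hg h => one_to_two b X Y g hb hX hY hg h⟩
  have h12 : Cond1 b X Y → Cond2 b X Y g := one_to_two b X Y g hb (by linarith) hY hg
  have h20 := two_to_zero b X Y g hb hX hY hg
  have h01 := zero_to_one b X Y g hb hX hY hg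
  exact ⟨⟨h12, fun h => h01 (h20 h)⟩, ⟨fun h => h20 (h12 h), h01⟩⟩

end BridgeTheorem
end

section
/- For every integer n, one has n ≥ 0 if and only if there exist integers x, y, z with n = x² + y² + z² + z. -/
theorem bin_red (N : ℕ) : ∀ A B C : ℤ, A ≤ N → 0 < A → 0 < A * C - B ^ 2 →
    ∃ p q r s : ℤ, p * s - q * r = 1 ∧
      0 < A * p ^ 2 + 2 * B * p * r + C * r ^ 2 ∧
      3 * (A * p ^ 2 + 2 * B * p * r + C * r ^ 2) ^ 2 ≤ 4 * (A * C - B ^ 2) := by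
  induction N with
  | zero => intro A B C h1 h2; exfalso; push_cast at h1; omega
  | succ N ih =>
    intro A B C h1 h2 h3
    -- shift `B` by a multiple of `A`
    obtain ⟨k, hk1, hk2⟩ : ∃ k : ℤ, 2 * (B + k * A) ≤ A ∧ -A ≤ 2 * (B + k * A) := by
      refine ⟨-((2 * B + A) / (2 * A)), ?_, ?_⟩
      · have := Int.lt_ediv_add_one_mul_self (2 * B + A) (by omega : 0 < 2 * A)
        nlinarith
      · have := Int.ediv_mul_le (2 * B + A) (by omega : 2 * A ≠ 0)
        nlinarith
    set B' := B + k * A with hB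
    set C' := A * k ^ 2 + 2 * B * k + C with hC
    have hD : A * C' - B' ^ 2 = A * C - B ^ 2 := by rw [hB, hC]; ring
    have hB2 : 4 * B' ^ 2 ≤ A ^ 2 := by nlinarith
    by_cases hCA : C' < A
    · have hC0 : 0 < C' := by
        by_contra hneg
        nlinarith [sq_nonneg B']
      obtain ⟨p, q, r, s, e1, e2, e3⟩ := ih C' (-B') A (by push_cast at h1; omega) hC0 (by nlinarith)
      have key : A * (k * p - r) ^ 2 + 2 * B * (k * p - r) * p + C * p ^ 2
          = C' * p ^ 2 + 2 * (-B') * p * r + A * r ^ 2 := by rw [hB, hC]; ring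
      refine ⟨k * p - r, k * q - s, p, q, by linarith, ?_, ?_⟩
      · rw [key]; exact e2
      · rw [key]; nlinarith
    · refine ⟨1, 0, 0, 1, by ring, by nlinarith, ?_⟩
      ring_nf
      nlinarith

/-- All values of the ternary form are sums of three squares. -/
def Good (a b c d e f : ℤ) : Prop :=
  ∀ x y z : ℤ, ∃ u v w : ℤ,
    a * x ^ 2 + b * y ^ 2 + c * z ^ 2 + 2 * d * y * z + 2 * e * x * z + 2 * f * x * y
      = u ^ 2 + v ^ 2 + w ^ 2

theorem Good.yz {a b c d e f : ℤ} (p q r s : ℤ) (h : p * s - q * r = 1)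
    (H : Good a (b * p ^ 2 + 2 * d * p * r + c * r ^ 2) (b * q ^ 2 + 2 * d * q * s + c * s ^ 2)
      (b * p * q + d * (p * s + q * r) + c * r * s) (f * q + e * s) (f * p + e * r)) :
    Good a b c d e f := by
  intro x y z
  obtain ⟨u, v, w, huvw⟩ := H x (s * y - q * z) (-r * y + p * z)
  refine ⟨u, v, w, ?_⟩
  rw [← huvw]
  have hy : y = p * (s * y - q * z) + q * (-r * y + p * z) := by linear_combination (-y) * h
  have hz : z = r * (s * y - q * z) + s * (-r * y + p * z) := by linear_combination (-z) * h
  generalize s * y - q * z = Y at *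
  generalize -r * y + p * z = Z at *
  subst hy hz
  ring

/-- Substituting `x + k y + l z` for `x`. -/
theorem Good.shift {a b c d e f : ℤ} (k l : ℤ)
    (H : Good a (b + 2 * f * k + a * k ^ 2) (c + 2 * e * l + a * l ^ 2)
      (d + f * l + e * k + a * k * l) (e + a * l) (f + a * k)) :
    Good a b c d e f := by
  intro x y z
  obtain ⟨u, v, w, huvw⟩ := H (x - k * y - l * z) y z
  refine ⟨u, v, w, ?_⟩
  rw [← huvw]
  ring

theorem Good.swap {a b c d e f : ℤ} (H : Good b a c e d f) : Good a b c d e f := by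
  intro x y z
  obtain ⟨u, v, w, huvw⟩ := H y x z
  refine ⟨u, v, w, ?_⟩
  rw [← huvw]
  ring

theorem good_one {a b c d e f : ℤ} (ha : a = 1) (hA : 0 < a * b - f ^ 2)
    (hdet : a * b * c + 2 * d * e * f - a * d ^ 2 - b * e ^ 2 - c * f ^ 2 = 1) :
    Good a b c d e f := by
  subst ha
  apply Good.shift (-f) (-e)
  have hD : (b - f ^ 2) * (c - e ^ 2) - (d - e * f) ^ 2 = 1 := by linarith
  obtain ⟨p, q, r, s, h1, h2, h3⟩ := bin_red (b - f ^ 2).toNat (b - f ^ 2) (d - e * f) (c - e ^ 2)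
    (Int.self_le_toNat _) (by linarith) (by rw [hD]; norm_num)
  intro x y z
  rw [hD] at h3
  have hY1 : y = p * (s * y - q * z) + q * (-r * y + p * z) := by linear_combination (-y) * h1
  have hZ1 : z = r * (s * y - q * z) + s * (-r * y + p * z) := by linear_combination (-z) * h1
  generalize s * y - q * z = Y at *
  generalize -r * y + p * z = Z at *
  set B := b - f ^ 2 with hB
  set D := d - e * f with hDD
  set C := c - e ^ 2 with hC
  have hB1 : B * p ^ 2 + 2 * D * p * r + C * r ^ 2 = 1 := by nlinarith
  set M := B * p * q + D * (p * s + q * r) + C * r * s with hM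
  have hc : B * q ^ 2 + 2 * D * q * s + C * s ^ 2 = 1 + M ^ 2 := by
    have : (B * p ^ 2 + 2 * D * p * r + C * r ^ 2) * (B * q ^ 2 + 2 * D * q * s + C * s ^ 2) - M ^ 2
      = (B * C - D ^ 2) * (p * s - q * r) ^ 2 := by rw [hM]; ring
    rw [hB1, hD, h1] at this
    linarith
  refine ⟨x, Y + M * Z, Z, ?_⟩
  have e1 : B * y ^ 2 + C * z ^ 2 + 2 * D * y * z = (Y + M * Z) ^ 2 + Z ^ 2 := by
    have : B * y ^ 2 + C * z ^ 2 + 2 * D * y * z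
        = (B * p ^ 2 + 2 * D * p * r + C * r ^ 2) * Y ^ 2 + 2 * M * Y * Z
          + (B * q ^ 2 + 2 * D * q * s + C * s ^ 2) * Z ^ 2 := by
      rw [hY1, hZ1, hM]; ring
    rw [this, hB1, hc]; ring
  rw [hB, hC, hDD] at e1
  linear_combination e1

theorem good_all (N : ℕ) : ∀ a b c d e f : ℤ, a ≤ N → 0 < a → 0 < a * b - f ^ 2 →
    a * b * c + 2 * d * e * f - a * d ^ 2 - b * e ^ 2 - c * f ^ 2 = 1 → Good a b c d e f := by
  induction N with
  | zero => intro a b c d e f h1 h2; exfalso; push_cast at h1; omega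
  | succ N ih =>
    intro a b c d e f haN ha hA hdet
    have hadj : (a * b - f ^ 2) * (a * c - e ^ 2) - (a * d - e * f) ^ 2 = a := by
      linear_combination a * hdet
    obtain ⟨p, q, r, s, h1, h2, h3⟩ := bin_red (a * b - f ^ 2).toNat (a * b - f ^ 2)
      (a * d - e * f) (a * c - e ^ 2) (Int.self_le_toNat _) hA (by rw [hadj]; exact ha)
    rw [hadj] at h3
    apply Good.yz p q r s h1
    have hA' : (a * b - f ^ 2) * p ^ 2 + 2 * (a * d - e * f) * p * r + (a * c - e ^ 2) * r ^ 2
      = a * (b * p ^ 2 + 2 * d * p * r + c * r ^ 2) - (f * p + e * r) ^ 2 := by ring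
    rw [hA'] at h2 h3
    have hdet' : a * (b * p ^ 2 + 2 * d * p * r + c * r ^ 2) * (b * q ^ 2 + 2 * d * q * s + c * s ^ 2)
        + 2 * (b * p * q + d * (p * s + q * r) + c * r * s) * (f * q + e * s) * (f * p + e * r)
        - a * (b * p * q + d * (p * s + q * r) + c * r * s) ^ 2
        - (b * p ^ 2 + 2 * d * p * r + c * r ^ 2) * (f * q + e * s) ^ 2
        - (b * q ^ 2 + 2 * d * q * s + c * s ^ 2) * (f * p + e * r) ^ 2 = 1 := by
      have : (p * s - q * r) ^ 2 = 1 := by rw [h1]; norm_num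
      linear_combination (p * s - q * r) ^ 2 * hdet + this
    generalize b * p ^ 2 + 2 * d * p * r + c * r ^ 2 = b' at *
    generalize b * q ^ 2 + 2 * d * q * s + c * s ^ 2 = c' at *
    generalize b * p * q + d * (p * s + q * r) + c * r * s = d' at *
    generalize f * q + e * s = e' at *
    generalize f * p + e * r = f' at *
    clear hA' hadj hdet hA h1
    obtain ⟨k, hk1, hk2⟩ : ∃ k : ℤ, 2 * (f' + a * k) ≤ a ∧ -a ≤ 2 * (f' + a * k) := by
      refine ⟨-((2 * f' + a) / (2 * a)), ?_, ?_⟩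
      · have := Int.lt_ediv_add_one_mul_self (2 * f' + a) (by omega : 0 < 2 * a)
        nlinarith
      · have := Int.ediv_mul_le (2 * f' + a) (by omega : 2 * a ≠ 0)
        nlinarith
    apply Good.shift k 0
    have hA' : a * b' - f' ^ 2 = a * (b' + 2 * f' * k + a * k ^ 2) - (f' + a * k) ^ 2 := by ring
    rw [hA'] at h2 h3
    have hdet'' : a * (b' + 2 * f' * k + a * k ^ 2) * (c' + 2 * e' * 0 + a * 0 ^ 2)
        + 2 * (d' + f' * 0 + e' * k + a * k * 0) * (e' + a * 0) * (f' + a * k)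
        - a * (d' + f' * 0 + e' * k + a * k * 0) ^ 2
        - (b' + 2 * f' * k + a * k ^ 2) * (e' + a * 0) ^ 2
        - (c' + 2 * e' * 0 + a * 0 ^ 2) * (f' + a * k) ^ 2 = 1 := by
      linear_combination hdet'
    generalize b' + 2 * f' * k + a * k ^ 2 = b'' at *
    generalize c' + 2 * e' * 0 + a * 0 ^ 2 = c'' at *
    generalize d' + f' * 0 + e' * k + a * k * 0 = d'' at *
    generalize e' + a * 0 = e'' at *
    generalize f' + a * k = f'' at *
    clear hA' hdet'
    by_cases hba : b'' < a
    · apply Good.swap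
      have hb0 : 0 < b'' := by
        by_contra hneg
        nlinarith [sq_nonneg f'']
      exact ih b'' a c'' e'' d'' f'' (by push_cast at haN; omega) hb0 (by linarith)
        (by linarith)
    · refine good_one ?_ h2 hdet''
      by_contra hne
      have ha2 : 2 ≤ a := by omega
      have hf2 : 4 * f'' ^ 2 ≤ a ^ 2 := by nlinarith
      generalize hX : a * b'' - f'' ^ 2 = X at *
      have h5 : 3 * a ^ 2 ≤ 4 * X := by nlinarith
      have h6 : 9 * (a ^ 2) ^ 2 ≤ 16 * X ^ 2 := by nlinarith [sq_nonneg a]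
      have h7 : 27 * (a ^ 2) ^ 2 ≤ 64 * a := by linarith
      have h8 : 4 ≤ a ^ 2 := by nlinarith
      nlinarith

theorem exists_prime_data (k : ℕ) : ∃ j p : ℕ, p.Prime ∧ p = (16 * k + 4) * j + (6 * k + 1) := by
  have hco : Nat.Coprime (6 * k + 1) (16 * k + 4) := by
    apply Nat.Coprime.symm
    apply Nat.coprime_of_dvd
    intro q hq h1 h2
    have h3 : q ∣ 4 := by
      have : (q : ℤ) ∣ 4 := by
        have e1 : (q : ℤ) ∣ ((16 * k + 4 : ℕ) : ℤ) := by exact_mod_cast h1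
        have e2 : (q : ℤ) ∣ ((6 * k + 1 : ℕ) : ℤ) := by exact_mod_cast h2
        have := dvd_sub (e1.mul_left 3) (e2.mul_left 8)
        push_cast at this
        ring_nf at this
        exact this
      exact_mod_cast this
    have h5 : q ∣ 2 := hq.dvd_of_dvd_pow (by simpa using h3 : q ∣ 2 ^ 2)
    have h6 : q = 2 := (Nat.prime_dvd_prime_iff_eq hq Nat.prime_two).1 h5
    subst h6
    omega
  obtain ⟨p, hgt, hp, hmod⟩ := Nat.forall_exists_prime_gt_and_modEq (6 * k + 1) (q := 16 * k + 4)
    (by omega) hco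
  have hdvd := (Nat.modEq_iff_dvd' hgt.le).1 hmod.symm
  obtain ⟨j, hj⟩ := hdvd
  exact ⟨j, p, hp, by omega⟩

theorem three_sq (k : ℕ) : ∃ u v w : ℤ, 4 * (k : ℤ) + 1 = u ^ 2 + v ^ 2 + w ^ 2 := by
  obtain ⟨j, p, hp, hpj⟩ := exists_prime_data k
  have := Fact.mk hp
  set m := 8 * j + 3 with hm
  have h2p : 2 * p + 1 = m * (4 * k + 1) := by rw [hpj, hm]; ring
  have hpodd : p % 2 = 1 := by rw [hpj]; ring_nf; omega
  have hmodd : Odd m := ⟨4 * j + 1, by omega⟩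
  have hpo : Odd p := Nat.odd_iff.2 hpodd
  have hJm : jacobiSym (p : ℤ) m = 1 := by
    have h1 : jacobiSym (-2) m = 1 := by
      rw [jacobiSym.at_neg_two hmodd, ZMod.χ₈'_nat_eq_if_mod_eight]
      rw [if_neg (by omega), if_pos (by omega)]
    have h2 : jacobiSym (-2 * (p : ℤ)) m = 1 := by
      rw [jacobiSym.mod_left, show (-2 * (p : ℤ)) = 1 - m * (4 * k + 1) by
        have : (2 * p + 1 : ℤ) = m * (4 * k + 1) := by exact_mod_cast h2p
        linarith, Int.sub_mul_emod_self_left, ← jacobiSym.mod_left, jacobiSym.one_left]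
    rwa [jacobiSym.mul_left, h1, one_mul] at h2
  have hJ : jacobiSym (-(m : ℤ)) p = 1 := by
    rw [jacobiSym.neg _ hpo]
    rcases Nat.odd_mod_four_iff.1 hpodd with h | h
    · rw [ZMod.χ₄_nat_one_mod_four h, one_mul,
        ← jacobiSym.quadratic_reciprocity_one_mod_four h hmodd, hJm]
    · rw [ZMod.χ₄_nat_three_mod_four h,
        jacobiSym.quadratic_reciprocity_three_mod_four (by omega) h, hJm]
      norm_num
  rw [← jacobiSym.legendreSym.to_jacobiSym] at hJ
  have hne : ((-(m : ℤ) : ℤ) : ZMod p) ≠ 0 := by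
    intro h0
    rw [(legendreSym.eq_zero_iff p _).2 h0] at hJ
    norm_num at hJ
  obtain ⟨t, ht⟩ := (legendreSym.eq_one_iff p hne).1 hJ
  obtain ⟨t, rfl⟩ := ZMod.intCast_surjective t
  have hdvd : (p : ℤ) ∣ t ^ 2 + m := by
    rw [← ZMod.intCast_zmod_eq_zero_iff_dvd]
    push_cast at ht ⊢
    rw [pow_two, ← ht]; ring
  obtain ⟨t, hdvd, hto⟩ : ∃ t : ℤ, (p : ℤ) ∣ t ^ 2 + m ∧ t % 2 = 1 := by
    rcases Int.emod_two_eq_zero_or_one t with h | h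
    · refine ⟨t + p, ?_, by omega⟩
      have : (t + p) ^ 2 + (m : ℤ) = (t ^ 2 + m) + p * (2 * t + p) := by ring
      rw [this]
      exact dvd_add hdvd (Dvd.intro _ rfl)
    · exact ⟨t, hdvd, h⟩
  have hdvd2 : (2 * p : ℤ) ∣ t ^ 2 + m := by
    apply IsCoprime.mul_dvd _ _ hdvd
    · have : Nat.Coprime 2 p := Nat.coprime_two_left.2 hpo
      exact_mod_cast Nat.isCoprime_iff_coprime.2 this
    · obtain ⟨i, hi⟩ : ∃ i, t = 2 * i + 1 := ⟨t / 2, by omega⟩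
      refine ⟨2 * i ^ 2 + 2 * i + 4 * j + 2, ?_⟩
      rw [hi, hm]; push_cast; ring
  obtain ⟨a, ha⟩ := hdvd2
  have hp0 : (0 : ℤ) < p := by exact_mod_cast hp.pos
  have hm0 : (0 : ℤ) < m := by rw [hm]; push_cast; positivity
  have ha0 : 0 < a := by
    by_contra hneg
    nlinarith [sq_nonneg t]
  have h2p' : (2 * p + 1 : ℤ) = m * (4 * k + 1) := by exact_mod_cast h2p
  obtain ⟨u, v, w, h⟩ := good_all a.toNat a (2 * p) (4 * k + 1) 0 1 t (Int.self_le_toNat _) ha0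
    (by linarith) (by linear_combination (-(4 * k + 1 : ℤ)) * ha - h2p') 0 0 1
  exact ⟨u, v, w, by linarith⟩

/-- **Gauss–Legendre three squares theorem (variant).**
For every integer `n`, one has `n ≥ 0` if and only if there exist integers
`x, y, z` with `n = x² + y² + z² + z`. -/
theorem int_nonneg_iff_sum_three_squares (n : ℤ) :
    0 ≤ n ↔ ∃ x y z : ℤ, n = x ^ 2 + y ^ 2 + z ^ 2 + z := by
  constructor
  · intro hn
    obtain ⟨k, rfl⟩ := Int.eq_ofNat_of_zero_le hn
    obtain ⟨u, v, w, h⟩ := three_sq k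
    have par : ∀ t : ℤ, ∃ i : ℤ, t = 2 * i ∨ t = 2 * i + 1 := fun t => ⟨t / 2, by omega⟩
    obtain ⟨a, ha⟩ := par u
    obtain ⟨b, hb⟩ := par v
    obtain ⟨c, hc⟩ := par w
    rcases ha with rfl | rfl <;> rcases hb with rfl | rfl <;> rcases hc with rfl | rfl <;>
      ring_nf at h <;>
      first
        | (exfalso; omega)
        | exact ⟨a, b, c, by linarith⟩
        | exact ⟨a, c, b, by linarith⟩
        | exact ⟨b, c, a, by linarith⟩
  · rintro ⟨x, y, z, rfl⟩
    have : 0 ≤ z ^ 2 + z := by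
      rcases le_or_gt 0 z with h | h <;> nlinarith
    nlinarith [sq_nonneg x, sq_nonneg y]
end
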